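/- arXiv:1704.06930 — 4 statements merged into one kernel-verified Lean document; each statement's English description precedes it below -/
import Mathlib

section
/- (Stuffle product analogue for bi-brackets, length one) For all integers s1, s2 ≥ 1 and r1, r2 ≥ 0 one has in ℚ⟦q⟧: [s1; r1]·[s2; r2] = [s1,s2; r1,r2] + [s2,s1; r2,r1] + binom(r1+r2, r1)·[s1+s2; r1+r2] + binom(r1+r2, r1)·∑_{j=1}^{s1} ((−1)^{s2−1}·B_{s1+s2−j}/(s1+s2−j)!)·binom(s1+s2−j−1, s1−j)·[j; r1+r2] + binom(r1+r2, r1)·∑_{j=1}^{s2} ((−1)^{s1−1}·B_{s1+s2−j}/(s1+s2−j)!)·binom(s1+s2−j−1, s2−j)·[j; r1+r2]. -/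
/-!
The coefficient of `q ^ N` in `[s₁; r₁] [s₂; r₂]` is a sum over `u₁ v₁ + u₂ v₂ = N`. The terms with
`u₁ > u₂` and with `u₁ < u₂` are the two bi-brackets of length two. On the diagonal
`u₁ = u₂ = u` one has `u (v₁ + v₂) = N`; grouping by `m = v₁ + v₂` leaves the convolution
`∑_{0 < a < m} a ^ p / p! * (m - a) ^ q / q!` with `p = s₁ - 1`, `q = s₂ - 1`, which must be written
as a linear combination of the powers of `m` (`conv_stuffle`).

That convolution is read off from a generating function. With `T = x - y` and
`B(T) = ∑ B_k T ^ k / k! = T / (e ^ T - 1)`, the geometric sum gives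
`T ∑_{0 < a < m} e ^ (a x + (m - a) y) = B(T) e ^ (m x) - (B(T) + T) e ^ (m y)` (`gf_stuffle`),
and `B(T) + T = B(-T)`. The right-hand side is homogeneous in `x, y` in each degree, so nothing is
lost by setting `y = 1`: in `ℚ[x]⟦t⟧`, with `x`, `y` scaled by `t`, one compares the coefficients of
`t ^ (n + 1)` for `n = p + q`, cancels the factor `x - 1` (`poly_stuffle`), and then compares the
coefficients of `x ^ p`. The `B_0` terms combine to a geometric sum in `x`, which produces the term
`m ^ (p + q + 1) / (p + q + 1)!` and hence `[s₁ + s₂; r₁ + r₂]`.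
-/

open Finset

open Classical in
/-- The bi-bracket `[s₁,…,s_l; r₁,…,r_l] ∈ ℚ⟦q⟧`. -/
noncomputable def biBracket {l : ℕ} (s r : Fin l → ℕ) : PowerSeries ℚ :=
  PowerSeries.mk fun n =>
    ∑ u : Fin l → Fin (n + 1), ∑ v : Fin l → Fin (n + 1),
      if (∀ i j : Fin l, i < j → (u j : ℕ) < (u i : ℕ)) ∧ (∀ j, 0 < (u j : ℕ)) ∧
          (∀ j, 0 < (v j : ℕ)) ∧ (∑ j, (u j : ℕ) * (v j : ℕ)) = n
      then ∏ j, (u j : ℚ) ^ (r j) / (Nat.factorial (r j)) *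
            ((v j : ℚ) ^ (s j - 1) / (Nat.factorial (s j - 1)))
      else 0

/-! ### The Bernoulli identity for convolutions of powers -/

open PowerSeries in
/-- `T ∑_{0 < a < m} e ^ (a x + (m - a) y) = e ^ (m x) B(T) - e ^ (m y) (B(T) + T)`, where
`T = x - y`, `B(T) = T / (e ^ T - 1)`, and `e ^ c` stands for the series `rescale c (exp R)`. It is
the telescoped geometric sum multiplied by `B(T)`, so no division by `e ^ T - 1` is needed. -/
theorem gf_stuffle {R : Type*} [CommRing R] [Algebra ℚ R] (x y : R) (m : ℕ) (hm : 1 ≤ m) :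
    C (x - y) * X * ∑ a ∈ Ico 1 m, rescale ((a : R) * x + ((m - a : ℕ) : R) * y) (exp R) =
      rescale ((m : R) * x) (exp R) * rescale (x - y) (bernoulliPowerSeries R) -
      rescale ((m : R) * y) (exp R) * (rescale (x - y) (bernoulliPowerSeries R) + C (x - y) * X) := by
  have hB : rescale (x - y) (bernoulliPowerSeries R) * (rescale (x - y) (exp R) - 1) =
      C (x - y) * X := by
    rw [← map_one (rescale (x - y)), ← map_sub, ← map_mul, bernoulliPowerSeries_mul_exp_sub_one,
      rescale_X]
  have hS : (rescale (x - y) (exp R) - 1) *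
      ∑ a ∈ Ico 1 m, rescale ((a : R) * x + ((m - a : ℕ) : R) * y) (exp R) =
      rescale ((m : R) * x) (exp R) - rescale (x - y) (exp R) * rescale ((m : R) * y) (exp R) := by
    have key : ∀ a ∈ Ico 1 m, (rescale (x - y) (exp R) - 1) *
        rescale ((a : R) * x + ((m - a : ℕ) : R) * y) (exp R) =
        rescale (((a + 1 : ℕ) : R) * x + ((m : R) - ((a + 1 : ℕ) : R)) * y) (exp R) -
        rescale ((a : R) * x + ((m : R) - (a : R)) * y) (exp R) := by
      intro a ha
      rw [sub_mul, one_mul, exp_mul_exp_eq_exp_add, Nat.cast_sub (mem_Ico.1 ha).2.le]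
      congr 3
      push_cast
      ring
    rw [mul_sum, sum_congr rfl key, sum_Ico_sub (fun a : ℕ =>
      rescale ((a : R) * x + ((m : R) - (a : R)) * y) (exp R)) hm, exp_mul_exp_eq_exp_add]
    congr 3 <;> push_cast <;> ring
  rw [← hB]
  linear_combination rescale (x - y) (bernoulliPowerSeries R) * hS

open Polynomial in
/-- The coefficient of `t ^ (n + 1)` in `gf_stuffle` for `x = X`, `y = 1`, divided by `X - 1`. -/
theorem poly_stuffle (n m : ℕ) (hm : 1 ≤ m) :
    ∑ a ∈ Ico 1 m, C (1 / (n.factorial : ℚ)) * (C (a : ℚ) * X + C ((m - a : ℕ) : ℚ)) ^ n =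
      C ((m : ℚ) ^ (n + 1) / (n + 1).factorial) * ∑ i ∈ range (n + 1), X ^ i +
      ∑ i ∈ range (n + 1), C (_root_.bernoulli (n + 1 - i) / (n + 1 - i).factorial *
        ((m : ℚ) ^ i / i.factorial)) * (X ^ i * (X + C (-1)) ^ (n - i)) +
      ∑ i ∈ range (n + 1), C (_root_.bernoulli (n + 1 - i) / (n + 1 - i).factorial *
        ((m : ℚ) ^ i / i.factorial) * (-1) ^ (n - i)) * (X + C (-1)) ^ (n - i) := by
  have hc : (X + C (-1) : ℚ[X]) ≠ 0 := X_add_C_ne_zero _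
  apply mul_left_cancel₀ hc
  have h := congrArg (PowerSeries.coeff (n + 1)) (gf_stuffle (X : ℚ[X]) 1 m hm)
  have hX : (X - 1 : ℚ[X]) = X + C (-1) := by simp [sub_eq_add_neg]
  -- Adding `T` to `B(T)` replaces `B_k` by `(-1) ^ k * B_k`: only `k = 1` matters, since
  -- `B_k = 0` for odd `k > 1`.
  have hB : PowerSeries.rescale (X - 1 : ℚ[X]) (bernoulliPowerSeries ℚ[X]) +
      PowerSeries.C (X - 1) * PowerSeries.X =
      PowerSeries.mk fun k => C ((-1) ^ k * (_root_.bernoulli k / k.factorial)) * (X + C (-1)) ^ k := by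
    ext1 k
    rw [PowerSeries.coeff_mk, map_add, PowerSeries.coeff_rescale, PowerSeries.coeff_C_mul,
      PowerSeries.coeff_X, hX, bernoulliPowerSeries, PowerSeries.coeff_mk]
    change _ * C _ + _ = _
    rcases eq_or_ne k 1 with rfl | hk
    · rw [_root_.bernoulli_one, if_pos rfl, pow_one, mul_one, mul_comm, ← add_one_mul, ← C_1, ← C_add]
      norm_num
    · rw [if_neg hk, mul_zero, add_zero, mul_comm, ← mul_div_assoc, ← bernoulli'_eq_bernoulli,
        bernoulli_eq_bernoulli'_of_ne_one hk]
  rw [hB, mul_assoc, PowerSeries.coeff_C_mul, PowerSeries.coeff_succ_X_mul, map_sum, map_sub,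
    PowerSeries.coeff_mul, PowerSeries.coeff_mul, Nat.sum_antidiagonal_eq_sum_range_succ_mk,
    Nat.sum_antidiagonal_eq_sum_range_succ_mk, sum_range_succ, sum_range_succ _ (n + 1)] at h
  simp only [PowerSeries.coeff_rescale, PowerSeries.coeff_exp, PowerSeries.coeff_mk,
    bernoulliPowerSeries, hX] at h
  -- The `B_0` terms are the only ones without a visible factor `X - 1`; together they give
  -- `X ^ (n + 1) - 1`.
  have hg : (X + C (-1)) * ∑ i ∈ range (n + 1), (X : ℚ[X]) ^ i = X ^ (n + 1) - 1 := by
    rw [← hX, mul_geom_sum]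
  have e1 : ∑ a ∈ Ico 1 m, C (1 / (n.factorial : ℚ)) * (C (a : ℚ) * X + C ((m - a : ℕ) : ℚ)) ^ n =
      ∑ a ∈ Ico 1 m, ((a : ℚ[X]) * X + ((m - a : ℕ) : ℚ[X]) * 1) ^ n *
        (algebraMap ℚ ℚ[X]) (1 / n.factorial) := by
    refine sum_congr rfl fun a _ => ?_
    rw [mul_comm, mul_one, map_natCast, map_natCast]
    rfl
  rw [e1, h, mul_add, mul_add, mul_left_comm (X + C (-1)) (C _) (∑ i ∈ range (n + 1), X ^ i), hg, mul_sum, mul_sum]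
  have e2 : ∀ x ∈ range (n + 1),
      ((m : ℚ[X]) * X) ^ x * (algebraMap ℚ ℚ[X]) (1 / x.factorial) *
        ((X + C (-1)) ^ (n + 1 - x) *
          (algebraMap ℚ ℚ[X]) (_root_.bernoulli (n + 1 - x) / (n + 1 - x).factorial)) =
      (X + C (-1)) * (C (_root_.bernoulli (n + 1 - x) / (n + 1 - x).factorial *
        ((m : ℚ) ^ x / x.factorial)) * (X ^ x * (X + C (-1)) ^ (n - x))) := by
    intro x hx
    rw [Nat.sub_add_comm (Nat.lt_succ_iff.1 (mem_range.1 hx)), pow_succ, div_eq_mul_one_div (_ ^ x)]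
    change _ * C _ * (_ * C _) = _
    simp only [C_mul, C_pow, map_natCast]
    ring
  have e3 : ∀ x ∈ range (n + 1),
      ((m : ℚ[X]) * 1) ^ x * (algebraMap ℚ ℚ[X]) (1 / x.factorial) *
        (C ((-1) ^ (n + 1 - x) * (_root_.bernoulli (n + 1 - x) / (n + 1 - x).factorial)) *
          (X + C (-1)) ^ (n + 1 - x)) =
      -((X + C (-1)) * (C (_root_.bernoulli (n + 1 - x) / (n + 1 - x).factorial *
        ((m : ℚ) ^ x / x.factorial) * (-1) ^ (n - x)) * (X + C (-1)) ^ (n - x))) := by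
    intro x hx
    rw [Nat.sub_add_comm (Nat.lt_succ_iff.1 (mem_range.1 hx)), pow_succ, pow_succ,
      div_eq_mul_one_div (_ ^ x)]
    change _ * C _ * _ = _
    simp only [C_mul, C_pow, map_natCast, C_neg, C_1]
    ring
  rw [sum_congr rfl e2, sum_congr rfl e3, sum_neg_distrib, div_eq_mul_one_div (_ ^ (n + 1))]
  change _ + _ * C _ * (_ * C _) - (_ + _ * C _ * _) = _
  simp only [C_mul, C_pow, map_natCast, Nat.sub_self, pow_zero, _root_.bernoulli_zero, Nat.factorial_zero, Nat.cast_one,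
    div_one, C_1, mul_one]
  ring

/-- The coefficient of `X ^ p` in `poly_stuffle` for `n = p + q`. -/
theorem conv_stuffle (p q m : ℕ) (hm : 1 ≤ m) :
    ∑ a ∈ Ico 1 m, ((a : ℚ) ^ p / p.factorial) * (((m - a : ℕ) : ℚ) ^ q / q.factorial) =
      (m : ℚ) ^ (p + q + 1) / (p + q + 1).factorial +
      ∑ i ∈ range (p + 1), ((-1) ^ q * bernoulli (p + q + 1 - i) / (p + q + 1 - i).factorial *
        ((p + q - i).choose (p - i))) * ((m : ℚ) ^ i / i.factorial) +
      ∑ i ∈ range (q + 1), ((-1) ^ p * bernoulli (p + q + 1 - i) / (p + q + 1 - i).factorial *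
        ((p + q - i).choose (q - i))) * ((m : ℚ) ^ i / i.factorial) := by
  have h := congrArg (fun f => Polynomial.coeff f p) (poly_stuffle (p + q) m hm)
  simp only [Polynomial.coeff_add, Polynomial.finsetSum_coeff, Polynomial.coeff_C_mul,
    Polynomial.coeff_X_pow, Polynomial.coeff_X_pow_mul', Polynomial.coeff_X_add_C_pow] at h
  have e1 : ∀ a ∈ Ico 1 m, 1 / ((p + q).factorial : ℚ) *
      ((Polynomial.C (a : ℚ) * Polynomial.X + Polynomial.C ((m - a : ℕ) : ℚ)) ^ (p + q)).coeff p =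
      ((a : ℚ) ^ p / p.factorial) * (((m - a : ℕ) : ℚ) ^ q / q.factorial) := by
    intro a _
    have hcoeff : ∀ c d : ℚ, ((Polynomial.C c * Polynomial.X + Polynomial.C d) ^ (p + q)).coeff p =
        c ^ p * d ^ q * (p + q).choose p := by
      intro c d
      have hterm : ∀ k, ((Polynomial.C c * Polynomial.X) ^ k * Polynomial.C d ^ (p + q - k) *
          ((p + q).choose k : Polynomial ℚ)).coeff p =
          if p = k then c ^ k * d ^ (p + q - k) * (p + q).choose k else 0 := by
        intro k
        rw [Polynomial.coeff_mul_natCast, mul_pow, ← Polynomial.C_pow, ← Polynomial.C_pow,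
          Polynomial.coeff_mul_C, Polynomial.coeff_C_mul, Polynomial.coeff_X_pow]
        split_ifs <;> simp
      rw [add_pow, Polynomial.finsetSum_coeff, sum_congr rfl fun k _ => hterm k, sum_ite_eq,
        if_pos (mem_range.2 (by omega)), Nat.add_sub_cancel_left]
    rw [hcoeff, Nat.cast_add_choose]
    have := Nat.factorial_ne_zero (p + q)
    field_simp
  have e2 : ∑ i ∈ range (p + q + 1), (if p = i then (1 : ℚ) else 0) = 1 := by
    rw [sum_ite_eq, if_pos (mem_range.2 (by omega))]
  rw [sum_congr rfl e1, e2, mul_one] at h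
  rw [h]
  congr 1
  · congr 1
    symm
    apply sum_subset_zero_on_sdiff (range_mono (by omega))
    · intro i hi
      rw [mem_sdiff, mem_range, mem_range] at hi
      rw [if_neg (by omega), mul_zero]
    · intro i hi
      rw [mem_range] at hi
      rw [if_pos (by omega), show p + q - i - (p - i) = q by omega]
      ring
  · symm
    apply sum_subset_zero_on_sdiff (range_mono (by omega))
    · intro i hi
      rw [mem_sdiff, mem_range, mem_range] at hi
      rw [Nat.choose_eq_zero_of_lt (by omega)]
      simp
    · intro i hi
      rw [mem_range] at hi
      have hs : (-1 : ℚ) ^ (p + q - i) * (-1) ^ (p + q - i - p) = (-1) ^ p := by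
        obtain ⟨k, rfl⟩ := Nat.exists_eq_add_of_le (Nat.lt_succ_iff.1 hi)
        rw [show p + (i + k) - i = p + k by omega, show p + k - p = k by omega, pow_add, mul_assoc,
          ← mul_pow]
        norm_num
      have hch : (p + q - i).choose p = (p + q - i).choose (q - i) :=
        Nat.choose_symm_of_eq_add (by omega)
      rw [← hs, hch]
      ring

/-! ### Coefficients of bi-brackets as sums over a box -/

/-- The weight `u ^ r / r! * v ^ (s - 1) / (s - 1)!` of one pair `(u, v)` in a bi-bracket. -/
noncomputable def bbWeight (s r u v : ℕ) : ℚ :=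
  (u : ℚ) ^ r / r.factorial * ((v : ℚ) ^ (s - 1) / (s - 1).factorial)

theorem sum_fin_eq_sum_Icc (N : ℕ) (f : ℕ → ℚ) (h0 : f 0 = 0) :
    ∑ u : Fin (N + 1), f u = ∑ u ∈ Icc 1 N, f u := by
  rw [Fin.sum_univ_eq_sum_range f (N + 1), range_eq_Ico, sum_eq_sum_Ico_succ_bot (by omega), h0,
    zero_add]
  rfl

theorem coeff_biBracket_one (s r N : ℕ) :
    PowerSeries.coeff N (biBracket ![s] ![r]) =
      ∑ u ∈ Icc 1 N, ∑ v ∈ Icc 1 N, if u * v = N then bbWeight s r u v else 0 := by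
  classical
  have key : PowerSeries.coeff N (biBracket ![s] ![r]) =
      ∑ u : Fin (N + 1), ∑ v : Fin (N + 1), if 0 < (u : ℕ) ∧ 0 < (v : ℕ) ∧ (u : ℕ) * v = N
        then bbWeight s r u v else 0 := by
    rw [biBracket, PowerSeries.coeff_mk, ← (Equiv.funUnique (Fin 1) (Fin (N + 1))).symm.sum_comp]
    refine sum_congr rfl fun u _ => ?_
    rw [← (Equiv.funUnique (Fin 1) (Fin (N + 1))).symm.sum_comp]
    refine sum_congr rfl fun v _ => ?_
    simp [bbWeight]
  rw [key, sum_fin_eq_sum_Icc N (fun u => ∑ v : Fin (N + 1),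
    if 0 < u ∧ 0 < (v : ℕ) ∧ u * v = N then bbWeight s r u v else 0) (by simp)]
  refine sum_congr rfl fun u hu => ?_
  rw [sum_fin_eq_sum_Icc N (fun v =>
    if 0 < u ∧ 0 < v ∧ u * v = N then bbWeight s r u v else 0) (by simp)]
  refine sum_congr rfl fun v hv => ?_
  rw [mem_Icc] at hu hv
  exact if_congr (by simp [show 0 < u by omega, show 0 < v by omega]) rfl rfl

theorem coeff_biBracket_two (s1 s2 r1 r2 N : ℕ) :
    PowerSeries.coeff N (biBracket ![s1, s2] ![r1, r2]) =
      ∑ u1 ∈ Icc 1 N, ∑ u2 ∈ Icc 1 N, ∑ v1 ∈ Icc 1 N, ∑ v2 ∈ Icc 1 N,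
        if u2 < u1 ∧ u1 * v1 + u2 * v2 = N then bbWeight s1 r1 u1 v1 * bbWeight s2 r2 u2 v2
        else 0 := by
  classical
  let F : ℕ → ℕ → ℕ → ℕ → ℚ := fun u1 u2 v1 v2 =>
    if u2 < u1 ∧ (0 < u1 ∧ 0 < u2) ∧ (0 < v1 ∧ 0 < v2) ∧ u1 * v1 + u2 * v2 = N
      then bbWeight s1 r1 u1 v1 * bbWeight s2 r2 u2 v2 else 0
  have key : PowerSeries.coeff N (biBracket ![s1, s2] ![r1, r2]) =
      ∑ u1 : Fin (N + 1), ∑ u2 : Fin (N + 1), ∑ v1 : Fin (N + 1), ∑ v2 : Fin (N + 1),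
        F u1 u2 v1 v2 := by
    rw [biBracket, PowerSeries.coeff_mk, ← (finTwoArrowEquiv (Fin (N + 1))).symm.sum_comp,
      Fintype.sum_prod_type]
    refine sum_congr rfl fun u1 _ => sum_congr rfl fun u2 _ => ?_
    rw [← (finTwoArrowEquiv (Fin (N + 1))).symm.sum_comp, Fintype.sum_prod_type]
    refine sum_congr rfl fun v1 _ => sum_congr rfl fun v2 _ => ?_
    simp [F, bbWeight, Fin.forall_fin_two, Fin.sum_univ_two, Fin.prod_univ_two]
  rw [key, sum_fin_eq_sum_Icc N (fun u1 => ∑ u2 : Fin (N + 1), ∑ v1 : Fin (N + 1),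
    ∑ v2 : Fin (N + 1), F u1 u2 v1 v2) (by simp [F])]
  refine sum_congr rfl fun u1 hu1 => ?_
  rw [sum_fin_eq_sum_Icc N (fun u2 => ∑ v1 : Fin (N + 1), ∑ v2 : Fin (N + 1), F u1 u2 v1 v2)
    (by simp [F])]
  refine sum_congr rfl fun u2 hu2 => ?_
  rw [sum_fin_eq_sum_Icc N (fun v1 => ∑ v2 : Fin (N + 1), F u1 u2 v1 v2) (by simp [F])]
  refine sum_congr rfl fun v1 hv1 => ?_
  rw [sum_fin_eq_sum_Icc N (fun v2 => F u1 u2 v1 v2) (by simp [F])]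
  refine sum_congr rfl fun v2 hv2 => ?_
  rw [mem_Icc] at hu1 hu2 hv1 hv2
  exact if_congr (by simp [show 0 < u1 by omega, show 0 < u2 by omega, show 0 < v1 by omega,
    show 0 < v2 by omega]) rfl rfl

/-- Enlarging the summation range beyond `N` does not change the `N`-th coefficient. -/
theorem coeff_biBracket_one_of_le (s r N M : ℕ) (h : N ≤ M) :
    PowerSeries.coeff N (biBracket ![s] ![r]) =
      ∑ u ∈ Icc 1 M, ∑ v ∈ Icc 1 M, if u * v = N then bbWeight s r u v else 0 := by
  rw [coeff_biBracket_one, ← sum_product', ← sum_product']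
  refine sum_subset (product_subset_product (Icc_subset_Icc_right h) (Icc_subset_Icc_right h)) ?_
  rintro ⟨u, v⟩ h1 h2
  simp only [mem_product, mem_Icc] at h1 h2
  refine if_neg fun h3 => h2 ⟨⟨h1.1.1, ?_⟩, h1.2.1, ?_⟩
  · exact h3 ▸ Nat.le_mul_of_pos_right u h1.2.1
  · exact h3 ▸ Nat.le_mul_of_pos_left v h1.1.1

theorem coeff_mul_biBracket (s1 s2 r1 r2 N : ℕ) :
    PowerSeries.coeff N (biBracket ![s1] ![r1] * biBracket ![s2] ![r2]) =
      ∑ u1 ∈ Icc 1 N, ∑ u2 ∈ Icc 1 N, ∑ v1 ∈ Icc 1 N, ∑ v2 ∈ Icc 1 N,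
        if u1 * v1 + u2 * v2 = N then bbWeight s1 r1 u1 v1 * bbWeight s2 r2 u2 v2 else 0 := by
  have h1 : ∀ x ∈ antidiagonal N,
      PowerSeries.coeff x.1 (biBracket ![s1] ![r1]) * PowerSeries.coeff x.2 (biBracket ![s2] ![r2])
      = ∑ u1 ∈ Icc 1 N, ∑ u2 ∈ Icc 1 N, ∑ v1 ∈ Icc 1 N, ∑ v2 ∈ Icc 1 N,
        if (u1 * v1, u2 * v2) = x then bbWeight s1 r1 u1 v1 * bbWeight s2 r2 u2 v2 else 0 := by
    intro x hx
    rw [coeff_biBracket_one_of_le s1 r1 x.1 N (by rw [HasAntidiagonal.mem_antidiagonal] at hx; omega),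
      coeff_biBracket_one_of_le s2 r2 x.2 N (by rw [HasAntidiagonal.mem_antidiagonal] at hx; omega), sum_mul_sum]
    refine sum_congr rfl fun u1 _ => sum_congr rfl fun u2 _ => ?_
    rw [sum_mul_sum]
    refine sum_congr rfl fun v1 _ => sum_congr rfl fun v2 _ => ?_
    rw [ite_zero_mul_ite_zero]
    exact if_congr (by rw [Prod.ext_iff]) rfl rfl
  rw [PowerSeries.coeff_mul, sum_congr rfl h1, sum_comm]
  refine sum_congr rfl fun u1 _ => ?_
  rw [sum_comm]
  refine sum_congr rfl fun u2 _ => ?_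
  rw [sum_comm]
  refine sum_congr rfl fun v1 _ => ?_
  rw [sum_comm]
  refine sum_congr rfl fun v2 _ => ?_
  rw [sum_ite_eq]
  exact if_congr HasAntidiagonal.mem_antidiagonal rfl rfl

/-! ### Splitting the product by the order of `u1` and `u2` -/

/-- Grouping pairs `(v1, v2)` by their sum `m`. -/
theorem sum_pairs_eq (N u : ℕ) (hu : 1 ≤ u) (f : ℕ → ℕ → ℚ) :
    ∑ v1 ∈ Icc 1 N, ∑ v2 ∈ Icc 1 N, (if u * v1 + u * v2 = N then f v1 v2 else 0) =
      ∑ m ∈ Icc 1 N, if u * m = N then ∑ a ∈ Ico 1 m, f a (m - a) else 0 := by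
  have h1 : ∀ m ∈ Icc 1 N, (if u * m = N then ∑ a ∈ Ico 1 m, f a (m - a) else 0) =
      ∑ v1 ∈ Icc 1 N, if u * m = N ∧ v1 < m then f v1 (m - v1) else 0 := by
    intro m hm
    rw [mem_Icc] at hm
    split_ifs with h
    · simp only [h, true_and]
      rw [← sum_filter]
      refine sum_congr ?_ fun _ _ => rfl
      ext a
      simp only [mem_Ico, mem_filter, mem_Icc]
      omega
    · simp [h]
  rw [sum_congr rfl h1]
  conv_rhs => rw [sum_comm]
  refine sum_congr rfl fun v1 hv1 => ?_
  rw [← sum_filter, ← sum_filter]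
  rw [mem_Icc] at hv1
  refine sum_nbij' (fun v2 => v1 + v2) (fun m => m - v1) ?_ ?_ ?_ ?_ ?_
  · intro v2 h
    simp only [mem_filter, mem_Icc] at h ⊢
    have : v1 + v2 ≤ u * (v1 + v2) := Nat.le_mul_of_pos_left _ hu
    rw [mul_add] at *
    omega
  · intro m h
    simp only [mem_filter, mem_Icc] at h ⊢
    refine ⟨by omega, ?_⟩
    rw [← mul_add, Nat.add_sub_cancel' h.2.2.le, h.2.1]
  · intro v2 h
    simp
  · intro m h
    simp only [mem_filter] at h
    exact Nat.add_sub_cancel' h.2.2.le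
  · intro v2 h
    simp

/-- The contribution of `u1 = u2 = u` and `v1 + v2 = m` to the product, as a combination of weights
of length-one bi-brackets. -/
theorem diag_stuffle (p q r1 r2 u m : ℕ) (hm : 1 ≤ m) :
    ∑ a ∈ Ico 1 m, bbWeight (p + 1) r1 u a * bbWeight (q + 1) r2 u (m - a) =
      ((r1 + r2).choose r1 : ℚ) * (bbWeight (p + q + 2) (r1 + r2) u m +
      ∑ i ∈ range (p + 1), ((-1) ^ q * bernoulli (p + q + 1 - i) / (p + q + 1 - i).factorial *
        ((p + q - i).choose (p - i))) * bbWeight (i + 1) (r1 + r2) u m +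
      ∑ i ∈ range (q + 1), ((-1) ^ p * bernoulli (p + q + 1 - i) / (p + q + 1 - i).factorial *
        ((p + q - i).choose (q - i))) * bbWeight (i + 1) (r1 + r2) u m) := by
  have hL : ∑ a ∈ Ico 1 m, bbWeight (p + 1) r1 u a * bbWeight (q + 1) r2 u (m - a) =
      (u : ℚ) ^ r1 / r1.factorial * ((u : ℚ) ^ r2 / r2.factorial) * ∑ a ∈ Ico 1 m,
        ((a : ℚ) ^ p / p.factorial) * (((m - a : ℕ) : ℚ) ^ q / q.factorial) := by
    rw [mul_sum]
    refine sum_congr rfl fun a _ => ?_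
    simp only [bbWeight, Nat.add_sub_cancel]
    ring
  have hu : (u : ℚ) ^ r1 / r1.factorial * ((u : ℚ) ^ r2 / r2.factorial) =
      ((r1 + r2).choose r1 : ℚ) * ((u : ℚ) ^ (r1 + r2) / (r1 + r2).factorial) := by
    rw [Nat.cast_add_choose, pow_add]
    have := Nat.factorial_ne_zero (r1 + r2)
    field_simp
  have hW : ∀ i, bbWeight (i + 1) (r1 + r2) u m =
      (u : ℚ) ^ (r1 + r2) / (r1 + r2).factorial * ((m : ℚ) ^ i / i.factorial) := fun i => rfl
  rw [hL, conv_stuffle p q m hm, hu, show p + q + 2 = p + q + 1 + 1 from rfl]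
  simp only [hW, mul_left_comm _ ((u : ℚ) ^ (r1 + r2) / (r1 + r2).factorial), ← mul_sum]
  ring

theorem sum_Icc_eq_range {M : Type*} [AddCommMonoid M] (n : ℕ) (f : ℕ → M) :
    ∑ j ∈ Icc 1 n, f j = ∑ i ∈ range n, f (i + 1) := by
  rw [range_eq_Ico, sum_Ico_add' f 0 n 1, zero_add]
  rfl

/-- The three parts are `u1 > u2`, `u1 < u2` and `u1 = u2`. -/
theorem coeff_mul_split (s1 s2 r1 r2 N : ℕ) :
    PowerSeries.coeff N (biBracket ![s1] ![r1] * biBracket ![s2] ![r2]) =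
      PowerSeries.coeff N (biBracket ![s1, s2] ![r1, r2]) +
      PowerSeries.coeff N (biBracket ![s2, s1] ![r2, r1]) +
      ∑ u ∈ Icc 1 N, ∑ m ∈ Icc 1 N,
        if u * m = N then ∑ a ∈ Ico 1 m, bbWeight s1 r1 u a * bbWeight s2 r2 u (m - a) else 0 := by
  have hd : ∑ u ∈ Icc 1 N, ∑ m ∈ Icc 1 N,
        (if u * m = N then ∑ a ∈ Ico 1 m, bbWeight s1 r1 u a * bbWeight s2 r2 u (m - a) else 0) =
      ∑ u1 ∈ Icc 1 N, ∑ u2 ∈ Icc 1 N, ∑ v1 ∈ Icc 1 N, ∑ v2 ∈ Icc 1 N,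
        if u1 = u2 ∧ u1 * v1 + u2 * v2 = N then bbWeight s1 r1 u1 v1 * bbWeight s2 r2 u2 v2
        else 0 := by
    refine sum_congr rfl fun u hu => ?_
    rw [← sum_pairs_eq N u (mem_Icc.1 hu).1 fun v1 v2 => bbWeight s1 r1 u v1 * bbWeight s2 r2 u v2]
    refine Eq.trans ?_ (sum_eq_single_of_mem u hu ?_).symm
    · simp
    · intro u2 _ h
      simp [h.symm]
  have hswap : PowerSeries.coeff N (biBracket ![s2, s1] ![r2, r1]) =
      ∑ u1 ∈ Icc 1 N, ∑ u2 ∈ Icc 1 N, ∑ v1 ∈ Icc 1 N, ∑ v2 ∈ Icc 1 N,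
        if u1 < u2 ∧ u1 * v1 + u2 * v2 = N then bbWeight s1 r1 u1 v1 * bbWeight s2 r2 u2 v2
        else 0 := by
    rw [coeff_biBracket_two, sum_comm]
    refine sum_congr rfl fun u1 _ => sum_congr rfl fun u2 _ => ?_
    rw [sum_comm]
    refine sum_congr rfl fun v1 _ => sum_congr rfl fun v2 _ => ?_
    rw [add_comm, mul_comm (bbWeight s2 _ _ _)]
  rw [hd, hswap, coeff_mul_biBracket, coeff_biBracket_two]
  simp only [← sum_add_distrib]
  refine sum_congr rfl fun u1 _ => sum_congr rfl fun u2 _ => sum_congr rfl fun v1 _ =>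
    sum_congr rfl fun v2 _ => ?_
  rcases lt_trichotomy u1 u2 with h | h | h
  · simp [h, h.ne, h.not_gt]
  · simp [h]
  · simp [h, h.ne', h.not_gt]

/-! ### The stuffle product -/

/-- Stuffle product analogue for bi-brackets in length one: for `s₁, s₂ ≥ 1` and `r₁, r₂ ≥ 0`,
`[s₁;r₁]·[s₂;r₂] = [s₁,s₂;r₁,r₂] + [s₂,s₁;r₂,r₁] + binom(r₁+r₂,r₁)·[s₁+s₂;r₁+r₂]`
plus the Bernoulli-number correction terms.  (`bernoulli` is Mathlib's Bernoulli number with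
`B_1 = −1/2`.) -/
theorem biBracket_stuffle (s1 s2 : ℕ) (h1 : 1 ≤ s1) (h2 : 1 ≤ s2) (r1 r2 : ℕ) :
    biBracket ![s1] ![r1] * biBracket ![s2] ![r2] =
      biBracket ![s1, s2] ![r1, r2] + biBracket ![s2, s1] ![r2, r1]
      + (((r1 + r2).choose r1 : ℚ)) • biBracket ![s1 + s2] ![r1 + r2]
      + (((r1 + r2).choose r1 : ℚ)) • ∑ j ∈ Finset.Icc 1 s1,
          ((-1 : ℚ) ^ (s2 - 1) * bernoulli (s1 + s2 - j) / (s1 + s2 - j).factorial *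
            ((s1 + s2 - j - 1).choose (s1 - j))) • biBracket ![j] ![r1 + r2]
      + (((r1 + r2).choose r1 : ℚ)) • ∑ j ∈ Finset.Icc 1 s2,
          ((-1 : ℚ) ^ (s1 - 1) * bernoulli (s1 + s2 - j) / (s1 + s2 - j).factorial *
            ((s1 + s2 - j - 1).choose (s2 - j))) • biBracket ![j] ![r1 + r2] := by
  obtain ⟨p, rfl⟩ : ∃ p, s1 = p + 1 := ⟨s1 - 1, by omega⟩
  obtain ⟨q, rfl⟩ : ∃ q, s2 = q + 1 := ⟨s2 - 1, by omega⟩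
  have hidx : ∀ i k : ℕ, (p + 1 + (q + 1) - (i + 1) = p + q + 1 - i) ∧
      (p + q + 1 - i - 1 = p + q - i) ∧ (k + 1 - (i + 1) = k - i) := by
    intro i k
    omega
  ext N
  rw [sum_Icc_eq_range, sum_Icc_eq_range]
  simp only [(hidx _ 0).1, (hidx _ 0).2.1, (hidx _ _).2.2, Nat.sub_zero, map_add,
    PowerSeries.coeff_smul, map_sum, coeff_mul_split, smul_eq_mul]
  rw [add_assoc (_ + _), add_assoc (_ + _), ← mul_add, ← mul_add]
  congr 1
  have hdiag : ∀ u ∈ Icc 1 N, ∀ m ∈ Icc 1 N,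
      (if u * m = N then ∑ a ∈ Ico 1 m,
        bbWeight (p + 1) r1 u a * bbWeight (q + 1) r2 u (m - a) else 0) =
      ((r1 + r2).choose r1 : ℚ) * ((if u * m = N then bbWeight (p + q + 2) (r1 + r2) u m else 0) +
      ∑ i ∈ range (p + 1), ((-1) ^ q * bernoulli (p + q + 1 - i) / (p + q + 1 - i).factorial *
        ((p + q - i).choose (p - i))) * (if u * m = N then bbWeight (i + 1) (r1 + r2) u m else 0) +
      ∑ i ∈ range (q + 1), ((-1) ^ p * bernoulli (p + q + 1 - i) / (p + q + 1 - i).factorial *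
        ((p + q - i).choose (q - i))) *
          (if u * m = N then bbWeight (i + 1) (r1 + r2) u m else 0)) := by
    intro u _ m hm
    split_ifs
    · exact diag_stuffle p q r1 r2 u m (mem_Icc.1 hm).1
    · simp
  rw [sum_congr rfl fun u hu => sum_congr rfl fun m hm => hdiag u hu m hm]
  have hpull : ∀ (n : ℕ) (c : ℕ → ℚ) (g : ℕ → ℕ → ℕ → ℚ),
      ∑ u ∈ Icc 1 N, ∑ m ∈ Icc 1 N, ∑ i ∈ range n, c i * g i u m =
      ∑ i ∈ range n, c i * ∑ u ∈ Icc 1 N, ∑ m ∈ Icc 1 N, g i u m := by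
    intro n c g
    rw [sum_congr rfl fun u _ => sum_comm, sum_comm]
    simp only [mul_sum]
  simp only [← mul_sum, sum_add_distrib, coeff_biBracket_one]
  rw [hpull, hpull, show p + 1 + (q + 1) = p + q + 2 by ring]
  ring
end

section
/- (Shuffle product analogue for bi-brackets, length one) For all integers s1, s2 ≥ 1 and r1, r2 ≥ 0 one has in ℚ⟦q⟧: [s1; r1]·[s2; r2] = ∑_{1≤j≤s1, 0≤k≤r2} binom(s1+s2−j−1, s1−j)·binom(r1+r2−k, r1)·(−1)^{r2−k}·[s1+s2−j, j; k, r1+r2−k] + ∑_{1≤j≤s2, 0≤k≤r1} binom(s1+s2−j−1, s1−1)·binom(r1+r2−k, r1−k)·(−1)^{r1−k}·[s1+s2−j, j; k, r1+r2−k] + binom(s1+s2−2, s1−1)·[s1+s2−1; r1+r2+1] + binom(s1+s2−2, s1−1)·∑_{j=0}^{r1} ((−1)^{r2}·B_{r1+r2−j+1}/(r1+r2−j+1)!)·binom(r1+r2−j, r1−j)·[s1+s2−1; j] + binom(s1+s2−2, s1−1)·∑_{j=0}^{r2} ((−1)^{r1}·B_{r1+r2−j+1}/(r1+r2−j+1)!)·binom(r1+r2−j,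 r2−j)·[s1+s2−1; j]. -/
/-!
Write `x^[r] = x ^ r / r!`. The coefficient of `q ^ n` in the product is the sum of
`u₁^[r₁] v₁^[s₁ - 1] u₂^[r₂] v₂^[s₂ - 1]` over positive integers with `u₁ v₁ + u₂ v₂ = n`, which
is split by comparing `v₁` with `v₂`.

For `v₁ > v₂` write `u₁ v₁ + u₂ v₂ = (u₁ + u₂) v₂ + u₁ (v₁ - v₂)` (`sum_quads_lt`). In the new
variables `U₁ = u₁ + u₂ > U₂ = u₁`, `V₁ = v₂`, `V₂ = v₁ - v₂` the summand becomes
`U₂^[r₁] (V₁ + V₂)^[s₁ - 1] (U₁ - U₂)^[r₂] V₁^[s₂ - 1]`, and the binomial theorem for divided powers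
(`dpow_expand`) turns it into the first double sum of length-two brackets. The case `v₁ < v₂` is
symmetric and gives the second double sum.

For `v₁ = v₂ = v` the exponent is `U v` with `U = u₁ + u₂`, so what is needed is a closed form of
`∑_{0 < u < U} u^[r₁] (U - u)^[r₂]` (`sum_dpow_mul_dpow`). It comes from the Euler–Maclaurin formula,
exact for polynomials: the integral is the beta integral `U^[r₁ + r₂ + 1]`
(`exists_beta_primitive`), and the Taylor coefficients of the summand at `U` and at `0` give the
two Bernoulli sums.
-/

open Finset

/-! ### Divided powers -/

/-- The divided power `x ^ r / r!`. -/
def dpow (x : ℚ) (r : ℕ) : ℚ := x ^ r / (r.factorial : ℚ)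

lemma dpow_mul (x : ℚ) (a b : ℕ) :
    dpow x a * dpow x b = ((a + b).choose a : ℚ) * dpow x (a + b) := by
  have ha : (a.factorial : ℚ) ≠ 0 := by exact_mod_cast a.factorial_ne_zero
  have hb : (b.factorial : ℚ) ≠ 0 := by exact_mod_cast b.factorial_ne_zero
  have hab : ((a + b).factorial : ℚ) ≠ 0 := by exact_mod_cast (a + b).factorial_ne_zero
  rw [Nat.cast_add_choose]
  simp only [dpow, pow_add]
  field_simp

lemma dpow_add (x y : ℚ) (n : ℕ) :
    dpow (x + y) n = ∑ k ∈ range (n + 1), dpow x k * dpow y (n - k) := by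
  have hn : (n.factorial : ℚ) ≠ 0 := by exact_mod_cast n.factorial_ne_zero
  simp only [dpow]
  rw [add_pow, Finset.sum_div]
  refine Finset.sum_congr rfl fun k hk => ?_
  have hk' : k ≤ n := by simpa [Nat.lt_succ_iff] using hk
  have h1 : (k.factorial : ℚ) ≠ 0 := by exact_mod_cast k.factorial_ne_zero
  have h2 : ((n - k).factorial : ℚ) ≠ 0 := by exact_mod_cast (n - k).factorial_ne_zero
  rw [Nat.cast_choose ℚ hk']
  field_simp

lemma dpow_neg (x : ℚ) (n : ℕ) : dpow (-x) n = (-1) ^ n * dpow x n := by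
  simp only [dpow]; rw [neg_pow, mul_div_assoc]

/-! ### Summation of polynomials -/

/-- Euler–Maclaurin summation for `p = P'`: since `(taylor U P).coeff i = P⁽ⁱ⁾(U) / i!`, this is
`∑_{0 ≤ u < U} P'(u) = ∑ᵢ Bᵢ / i! · (P⁽ⁱ⁾(U) - P⁽ⁱ⁾(0))`. -/
lemma sum_range_derivative (P : Polynomial ℚ) (U N : ℕ) (hN : P.natDegree < N) :
    ∑ u ∈ range U, P.derivative.eval (u : ℚ) =
      ∑ i ∈ range N, bernoulli i *
        ((Polynomial.taylor (U : ℚ) P).coeff i - P.coeff i) := by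
  have hN' : P.natDegree ≤ N - 1 := by omega
  have hN1 : 1 ≤ N := by omega
  clear hN
  refine Polynomial.induction_with_natDegree_le (fun P : Polynomial ℚ =>
    ∑ u ∈ range U, P.derivative.eval (u : ℚ) = ∑ i ∈ range N, bernoulli i *
      ((Polynomial.taylor (U : ℚ) P).coeff i - P.coeff i)) (N - 1) (by simp) ?_ ?_ P hN'
  · intro n c hc hn
    obtain _ | n := n
    · simp
    have hp : ∀ i, ((Polynomial.taylor (U : ℚ) (Polynomial.C c * Polynomial.X ^ (n + 1))).coeff i
        = c * ((U : ℚ) ^ (n + 1 - i) * ((n + 1).choose i : ℚ))) := by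
      intro i
      rw [Polynomial.taylor_mul, Polynomial.taylor_C, Polynomial.taylor_pow, Polynomial.taylor_X,
        Polynomial.coeff_C_mul, Polynomial.coeff_X_add_C_pow]
    have hd : ∀ u : ℕ, (Polynomial.derivative
        (Polynomial.C c * Polynomial.X ^ (n + 1))).eval (u : ℚ) = c * (n + 1) * (u : ℚ) ^ n := by
      intro u
      simp [mul_assoc]
    simp only [hp, hd, Polynomial.coeff_C_mul, Polynomial.coeff_X_pow]
    rw [← Finset.mul_sum, sum_range_pow]
    have hsub : range (n + 2) ⊆ range N := by
      intro i; simp only [Finset.mem_range]; omega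
    rw [← Finset.sum_subset hsub, Finset.sum_range_succ _ (n + 1), Finset.mul_sum]
    · simp only [if_true, Nat.sub_self, Nat.choose_self, pow_zero]
      rw [show bernoulli (n + 1) * (c * (1 * ((1 : ℕ) : ℚ)) - c * 1) = 0 by simp, add_zero]
      refine Finset.sum_congr rfl fun i hi => ?_
      have : i ≠ n + 1 := by simp at hi; omega
      have h0 : (n + 1 : ℚ) ≠ 0 := by positivity
      simp only [this, if_false]
      field_simp
      ring
    · intro i _ hi
      have hi' : n + 1 < i := by simp at hi; omega
      simp [Nat.choose_eq_zero_of_lt hi', hi'.ne']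
  · intro f g hfg hg h1 h2
    simp only [Polynomial.eval_add, Finset.sum_add_distrib, h1, h2, map_add,
      Polynomial.coeff_add]
    rw [← Finset.sum_add_distrib]
    exact Finset.sum_congr rfl fun i _ => by ring

/-- The same summation over `0 < u < U`: dropping the term `u = 0` replaces `B₁` by `-B₁`
at the lower end. -/
lemma sum_Ico_derivative (P : Polynomial ℚ) (U N : ℕ) (hU : 1 ≤ U) (hN : P.natDegree < N) :
    ∑ u ∈ Ico 1 U, P.derivative.eval (u : ℚ) =
      ∑ i ∈ range N, (bernoulli i * (Polynomial.taylor (U : ℚ) P).coeff i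
        - bernoulli' i * P.coeff i) := by
  -- `N + 2` guarantees that the index `i = 1` of the correction term occurs
  have h := sum_range_derivative P U (N + 2) (by omega)
  have hext : ∑ i ∈ range N, (bernoulli i * (Polynomial.taylor (U : ℚ) P).coeff i
        - bernoulli' i * P.coeff i) = ∑ i ∈ range (N + 2),
        (bernoulli i * (Polynomial.taylor (U : ℚ) P).coeff i - bernoulli' i * P.coeff i) := by
    refine Finset.sum_subset (by intro i; simp only [Finset.mem_range]; omega) ?_
    intro i _ hi
    have hi' : P.natDegree < i := by simp at hi; omega
    rw [Polynomial.coeff_eq_zero_of_natDegree_lt hi', Polynomial.coeff_eq_zero_of_natDegree_lt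
      (by rwa [Polynomial.natDegree_taylor])]
    simp
  rw [hext]
  rw [Finset.range_eq_Ico, Finset.sum_eq_sum_Ico_succ_bot (by omega)] at h
  have h0 : P.derivative.eval ((0 : ℕ) : ℚ) = P.coeff 1 := by
    rw [Nat.cast_zero, ← Polynomial.coeff_zero_eq_eval_zero, Polynomial.coeff_derivative]; simp
  rw [h0] at h
  have hdiff : ∑ i ∈ range (N + 2), (bernoulli' i - bernoulli i) * P.coeff i = P.coeff 1 := by
    rw [Finset.sum_eq_single 1]
    · rw [bernoulli_one, bernoulli'_one]; ring
    · intro i _ hi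
      rw [bernoulli_eq_bernoulli'_of_ne_one hi]; ring
    · simp
  have : ∑ i ∈ range (N + 2), (bernoulli i * (Polynomial.taylor (U : ℚ) P).coeff i
        - bernoulli' i * P.coeff i) = ∑ i ∈ range (N + 2), bernoulli i *
        ((Polynomial.taylor (U : ℚ) P).coeff i - P.coeff i)
        - ∑ i ∈ range (N + 2), (bernoulli' i - bernoulli i) * P.coeff i := by
    rw [← Finset.sum_sub_distrib]
    exact Finset.sum_congr rfl fun i _ => by ring
  rw [this, hdiff, ← h]
  simp

/-- The beta integral: an antiderivative `P` of `X ^ a / a! * (U - X) ^ b / b!` vanishing at `0`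
takes the value `U ^ (a + b + 1) / (a + b + 1)!` at `U`. -/
lemma exists_beta_primitive (U : ℚ) (a b : ℕ) : ∃ P : Polynomial ℚ,
    P.derivative = Polynomial.C ((a.factorial : ℚ)⁻¹ * (b.factorial : ℚ)⁻¹) *
      (Polynomial.X ^ a * (Polynomial.C U - Polynomial.X) ^ b) ∧
    P.eval 0 = 0 ∧ P.eval U = dpow U (a + b + 1) ∧ P.natDegree < a + b + 2 := by
  induction b generalizing a with
  | zero =>
    refine ⟨Polynomial.C ((a + 1).factorial : ℚ)⁻¹ * Polynomial.X ^ (a + 1), ?_, ?_, ?_, ?_⟩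
    · have h0 : (a + 1 : ℚ) ≠ 0 := by positivity
      have h1 : (a.factorial : ℚ) ≠ 0 := by exact_mod_cast a.factorial_ne_zero
      rw [Polynomial.derivative_C_mul_X_pow]
      simp only [pow_zero, mul_one, Nat.add_sub_cancel]
      congr 2
      rw [Nat.factorial_succ]
      push_cast
      field_simp
      simp
    · simp
    · simp [dpow]; ring
    · exact (Polynomial.natDegree_C_mul_X_pow_le _ _).trans_lt (by omega)
  | succ b ih =>
    -- integration by parts
    obtain ⟨Q, hQ, hQ0, hQU, hdeg⟩ := ih (a + 1)
    refine ⟨Polynomial.C (((a + 1).factorial : ℚ)⁻¹ * ((b + 1).factorial : ℚ)⁻¹) *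
      (Polynomial.X ^ (a + 1) * (Polynomial.C U - Polynomial.X) ^ (b + 1)) + Q, ?_, ?_, ?_, ?_⟩
    · have h0 : (a + 1 : ℚ) ≠ 0 := by positivity
      have h0' : (b + 1 : ℚ) ≠ 0 := by positivity
      have h1 : (a.factorial : ℚ) ≠ 0 := by exact_mod_cast a.factorial_ne_zero
      have h2 : (b.factorial : ℚ) ≠ 0 := by exact_mod_cast b.factorial_ne_zero
      have e1 : (a.factorial : ℚ)⁻¹ * ((b + 1).factorial : ℚ)⁻¹ =
          (a + 1) * (((a + 1).factorial : ℚ)⁻¹ * ((b + 1).factorial : ℚ)⁻¹) := by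
        rw [Nat.factorial_succ a]; push_cast; field_simp
      have e2 : ((a + 1).factorial : ℚ)⁻¹ * (b.factorial : ℚ)⁻¹ =
          (b + 1) * (((a + 1).factorial : ℚ)⁻¹ * ((b + 1).factorial : ℚ)⁻¹) := by
        rw [Nat.factorial_succ b]; push_cast; field_simp
      rw [Polynomial.derivative_add, hQ, e1, e2]
      simp only [Polynomial.derivative_mul, Polynomial.derivative_C, Polynomial.derivative_pow,
        Polynomial.derivative_X, Polynomial.derivative_sub, Polynomial.C_mul, Polynomial.C_add,
        Nat.add_sub_cancel, Nat.cast_add, Nat.cast_one, Polynomial.C_1]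
      ring
    · simp [hQ0]
    · simp [hQU]; ring_nf
    · refine (Polynomial.natDegree_add_le _ _).trans_lt (max_lt ?_ (by omega))
      refine (Polynomial.natDegree_C_mul_le _ _).trans_lt ?_
      refine Polynomial.natDegree_mul_le.trans_lt ?_
      have h1 : (Polynomial.X ^ (a + 1) : Polynomial ℚ).natDegree ≤ a + 1 := by simp
      have h2 : ((Polynomial.C U - Polynomial.X) ^ (b + 1) : Polynomial ℚ).natDegree ≤ b + 1 := by
        refine Polynomial.natDegree_pow_le.trans ?_
        have : (Polynomial.C U - Polynomial.X).natDegree ≤ 1 := by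
          refine (Polynomial.natDegree_sub_le _ _).trans ?_
          simp
        nlinarith
      omega

lemma coeff_X_pow_mul_C_sub_X_pow (U : ℚ) (a b m : ℕ) :
    (Polynomial.X ^ a * (Polynomial.C U - Polynomial.X) ^ b).coeff m =
      if a ≤ m then (-1) ^ (m - a) * U ^ (b - (m - a)) * (b.choose (m - a) : ℚ) else 0 := by
  have h : (Polynomial.C U - Polynomial.X : Polynomial ℚ) ^ b
      = Polynomial.C ((-1) ^ b) * (Polynomial.X + Polynomial.C (-U)) ^ b := by
    rw [Polynomial.C_pow, ← mul_pow]
    congr 1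
    simp
    ring
  rw [mul_comm, Polynomial.coeff_mul_X_pow']
  split_ifs with hm
  · rw [h, Polynomial.coeff_C_mul, Polynomial.coeff_X_add_C_pow]
    rcases le_or_gt (m - a) b with hb | hb
    · obtain ⟨c, hc⟩ := Nat.exists_eq_add_of_le hb
      rw [hc, Nat.add_sub_cancel_left, neg_pow U, pow_add]
      have : (-1 : ℚ) ^ c * (-1) ^ c = 1 := by rw [← mul_pow]; simp
      linear_combination ((-1 : ℚ) ^ (m - a) * U ^ c * ((m - a + c).choose (m - a) : ℚ)) * this
    · simp [Nat.choose_eq_zero_of_lt hb]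
  · rfl

/-- Coefficients of `X ^ a * (U - X) ^ b` expanded around `X = U`, i.e. of
`(X + U) ^ a * (-X) ^ b`. -/
lemma coeff_taylor_beta (U : ℚ) (a b m : ℕ) :
    (Polynomial.taylor U (Polynomial.X ^ a * (Polynomial.C U - Polynomial.X) ^ b)).coeff m =
      if b ≤ m then (-1) ^ b * U ^ (a - (m - b)) * (a.choose (m - b) : ℚ) else 0 := by
  have h : Polynomial.taylor U (Polynomial.X ^ a * (Polynomial.C U - Polynomial.X) ^ b) =
      Polynomial.C ((-1) ^ b) * ((Polynomial.X + Polynomial.C U) ^ a * Polynomial.X ^ b) := by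
    rw [Polynomial.taylor_mul, Polynomial.taylor_pow, Polynomial.taylor_pow, map_sub,
      Polynomial.taylor_X, Polynomial.taylor_C]
    rw [show (Polynomial.C U - (Polynomial.X + Polynomial.C U) : Polynomial ℚ)
      = -1 * Polynomial.X by ring, mul_pow]
    simp only [map_pow, map_neg, Polynomial.C_1]
    ring
  rw [h, Polynomial.coeff_C_mul, Polynomial.coeff_mul_X_pow']
  split_ifs
  · rw [Polynomial.coeff_X_add_C_pow]; ring
  · simp

/-- The substitution `m = a + b - j` for a function supported on `m ≥ b`. -/
lemma sum_range_shift (a b : ℕ) (f : ℕ → ℚ) (hf : ∀ m < b, f m = 0) :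
    ∑ m ∈ range (a + b + 1), f m = ∑ j ∈ range (a + 1), f (a + b - j) := by
  rw [← Finset.sum_range_reflect, ← Finset.sum_subset (s₁ := range (a + 1))]
  · exact Finset.sum_congr rfl fun j _ => by congr 1
  · intro j; simp only [Finset.mem_range]; omega
  · intro j h1 h2; simp only [Finset.mem_range] at h1 h2; exact hf _ (by omega)

/-- Closed form of the convolution of two power functions; as generating series in `X, Y` this is
`∑_{0 < u < U} e^{uX + (U - u)Y} = e^{UX} / (e^{X - Y} - 1) + e^{UY} / (e^{Y - X} - 1)`. -/
lemma sum_dpow_mul_dpow (U : ℕ) (hU : 1 ≤ U) (a b : ℕ) :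
    ∑ u ∈ Ico 1 U, dpow u a * dpow (U - u : ℚ) b =
      dpow U (a + b + 1)
      + ∑ j ∈ range (a + 1), ((-1 : ℚ) ^ b * bernoulli (a + b - j + 1) /
          (a + b - j + 1).factorial * ((a + b - j).choose (a - j))) * dpow U j
      + ∑ j ∈ range (b + 1), ((-1 : ℚ) ^ a * bernoulli (a + b - j + 1) /
          (a + b - j + 1).factorial * ((a + b - j).choose (b - j))) * dpow U j := by
  obtain ⟨P, hP, hP0, hPU, hdeg⟩ := exists_beta_primitive (U : ℚ) a b
  have h := sum_Ico_derivative P U (a + b + 2) hU hdeg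
  have hl : ∑ u ∈ Ico 1 U, dpow u a * dpow (U - u : ℚ) b
      = ∑ u ∈ Ico 1 U, P.derivative.eval (u : ℚ) := by
    refine Finset.sum_congr rfl fun u _ => ?_
    rw [hP]; simp [dpow]; ring
  have hc : ∀ m, P.coeff (m + 1) = P.derivative.coeff m / (m + 1) := by
    intro m
    have : (m + 1 : ℚ) ≠ 0 := by positivity
    rw [Polynomial.coeff_derivative]; field_simp
  have ht : ∀ m, (Polynomial.taylor (U : ℚ) P).coeff (m + 1) =
      (Polynomial.taylor (U : ℚ) P.derivative).coeff m / (m + 1) := by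
    intro m
    have h0 : (m + 1 : ℚ) ≠ 0 := by positivity
    have : Polynomial.taylor (U : ℚ) P.derivative
        = (Polynomial.taylor (U : ℚ) P).derivative := by
      simp [Polynomial.taylor_apply, Polynomial.derivative_comp]
    rw [this, Polynomial.coeff_derivative]; field_simp
  have hch : ∀ i j : ℕ, ((j + i).choose i : ℚ)
      = (j + i).factorial / (i.factorial * j.factorial) := by
    intro i j; rw [add_comm, Nat.cast_add_choose]
  rw [hl, h, Finset.sum_range_succ', Polynomial.taylor_coeff_zero, hPU,
    Polynomial.coeff_zero_eq_eval_zero, hP0, Finset.sum_sub_distrib]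
  simp only [bernoulli_zero, bernoulli'_zero, one_mul, sub_zero]
  rw [sum_range_shift a b, Nat.add_comm a b, sum_range_shift b a, Nat.add_comm b a]
  · rw [sub_eq_add_neg, ← Finset.sum_neg_distrib]
    rw [add_comm, ← add_assoc]
    congr 1
    · congr 1
      refine Finset.sum_congr rfl fun j hj => ?_
      obtain ⟨i, rfl⟩ : ∃ i, a = j + i := ⟨a - j, by simp at hj; omega⟩
      rw [ht, hP, Polynomial.taylor_mul, Polynomial.taylor_C, Polynomial.coeff_C_mul,
        coeff_taylor_beta, if_pos (by omega), show j + i + b - j = i + b by omega,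
        show i + b - b = i by omega, show j + i - i = j by omega,
        show j + i - j = i by omega, Nat.cast_add_choose, hch, Nat.factorial_succ]
      have h1 : (i.factorial : ℚ) ≠ 0 := by exact_mod_cast i.factorial_ne_zero
      have h2 : (j.factorial : ℚ) ≠ 0 := by exact_mod_cast j.factorial_ne_zero
      have h3 : (b.factorial : ℚ) ≠ 0 := by exact_mod_cast b.factorial_ne_zero
      have h4 : ((i + b).factorial : ℚ) ≠ 0 := by exact_mod_cast (i + b).factorial_ne_zero
      have h5 : ((j + i).factorial : ℚ) ≠ 0 := by exact_mod_cast (j + i).factorial_ne_zero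
      have h6 : (i + b + 1 : ℚ) ≠ 0 := by positivity
      simp only [dpow]
      push_cast
      field_simp
    · refine Finset.sum_congr rfl fun j hj => ?_
      obtain ⟨i, rfl⟩ : ∃ i, b = j + i := ⟨b - j, by simp at hj; omega⟩
      rw [hc, hP, Polynomial.coeff_C_mul, coeff_X_pow_mul_C_sub_X_pow, if_pos (by omega),
        show a + (j + i) - j = a + i by omega,
        show a + i - a = i by omega, show j + i - i = j by omega,
        show j + i - j = i by omega, bernoulli, hch, hch, Nat.factorial_succ]
      have h1 : (i.factorial : ℚ) ≠ 0 := by exact_mod_cast i.factorial_ne_zero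
      have h2 : (j.factorial : ℚ) ≠ 0 := by exact_mod_cast j.factorial_ne_zero
      have h3 : (a.factorial : ℚ) ≠ 0 := by exact_mod_cast a.factorial_ne_zero
      have h4 : ((a + i).factorial : ℚ) ≠ 0 := by exact_mod_cast (a + i).factorial_ne_zero
      have h5 : ((j + i).factorial : ℚ) ≠ 0 := by exact_mod_cast (j + i).factorial_ne_zero
      have h6 : (a + i + 1 : ℚ) ≠ 0 := by positivity
      -- unfolding `bernoulli` to `bernoulli'` left a sign, which absorbs that of the lower endpoint
      have hs : (-1 : ℚ) ^ a * (-1) ^ (a + i + 1) = - (-1) ^ i := by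
        rw [pow_succ, pow_add]
        have : (-1 : ℚ) ^ a * (-1) ^ a = 1 := by rw [← mul_pow]; simp
        linear_combination (-(-1 : ℚ) ^ i) * this
      rw [← mul_assoc ((-1 : ℚ) ^ a), hs]
      simp only [dpow]
      push_cast
      field_simp
  · intro m hm
    rw [hc, hP, Polynomial.coeff_C_mul, coeff_X_pow_mul_C_sub_X_pow, if_neg (by omega)]
    simp
  · intro m hm
    rw [ht, hP, Polynomial.taylor_mul, Polynomial.taylor_C, Polynomial.coeff_C_mul,
      coeff_taylor_beta, if_neg (by omega)]
    simp

/-! ### Coefficients of brackets -/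

/-- The quadruples `(u₁, v₁, u₂, v₂)` of positive integers with `u₁ v₁ + u₂ v₂ = n`. -/
def quads (n : ℕ) : Finset (ℕ × ℕ × ℕ × ℕ) :=
  {x ∈ Icc 1 n ×ˢ Icc 1 n ×ˢ Icc 1 n ×ˢ Icc 1 n | x.1 * x.2.1 + x.2.2.1 * x.2.2.2 = n}

lemma mem_quads {n a b c d : ℕ} :
    (a, b, c, d) ∈ quads n ↔ 0 < a ∧ 0 < b ∧ 0 < c ∧ 0 < d ∧ a * b + c * d = n := by
  simp only [quads, Finset.mem_filter, Finset.mem_product, Finset.mem_Icc]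
  constructor
  · rintro ⟨⟨h1, h2, h3, h4⟩, h⟩
    exact ⟨h1.1, h2.1, h3.1, h4.1, h⟩
  · rintro ⟨h1, h2, h3, h4, h⟩
    have := Nat.le_mul_of_pos_right a h2
    have := Nat.le_mul_of_pos_left b h1
    have := Nat.le_mul_of_pos_right c h4
    have := Nat.le_mul_of_pos_left d h3
    refine ⟨⟨⟨h1, ?_⟩, ⟨h2, ?_⟩, ⟨h3, ?_⟩, ⟨h4, ?_⟩⟩, h⟩ <;> omega

lemma coeff_biBracket_one_s3 (s r n : ℕ) :
    PowerSeries.coeff n (biBracket ![s] ![r]) =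
      ∑ x ∈ n.divisorsAntidiagonal, dpow x.1 r * dpow x.2 (s - 1) := by
  classical
  rw [biBracket, PowerSeries.coeff_mk, ← Finset.sum_product', ← Finset.sum_filter]
  refine Finset.sum_bij (fun p _ => ((p.1 0 : ℕ), (p.2 0 : ℕ))) ?_ ?_ ?_ ?_
  · rintro ⟨u, v⟩ h
    simp only [Finset.mem_filter, Fin.forall_fin_one, Fin.sum_univ_one] at h
    obtain ⟨-, -, hu, hv, h⟩ := h
    rw [Nat.mem_divisorsAntidiagonal]
    refine ⟨h, ?_⟩
    have := Nat.mul_pos hu hv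
    omega
  · rintro ⟨u, v⟩ _ ⟨u', v'⟩ _ h
    simp only [Prod.mk.injEq] at h
    refine Prod.ext ?_ ?_ <;> funext i <;> rw [Subsingleton.elim i 0] <;> apply Fin.ext
    exacts [h.1, h.2]
  · rintro ⟨a, b⟩ h
    obtain ⟨h, hn⟩ := Nat.mem_divisorsAntidiagonal.1 h
    simp only at h
    have ha : 0 < a := Nat.pos_of_ne_zero (by rintro rfl; simp at h; omega)
    have hb : 0 < b := Nat.pos_of_ne_zero (by rintro rfl; simp at h; omega)
    have h1 := Nat.le_mul_of_pos_right a hb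
    have h2 := Nat.le_mul_of_pos_left b ha
    refine ⟨(fun _ => ⟨a, by omega⟩, fun _ => ⟨b, by omega⟩), ?_, rfl⟩
    simp only [Finset.mem_filter, Finset.mem_product, Finset.mem_univ, true_and,
      Fin.forall_fin_one, Fin.sum_univ_one]
    exact ⟨fun h0 => absurd h0 (lt_irrefl _), ha, hb, h⟩
  · rintro ⟨u, v⟩ _
    simp [dpow]

lemma coeff_biBracket_two_s3 (s t r q n : ℕ) :
    PowerSeries.coeff n (biBracket ![s, t] ![r, q]) =
      ∑ x ∈ quads n with x.2.2.1 < x.1, dpow x.1 r * dpow x.2.1 (s - 1) *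
        (dpow x.2.2.1 q * dpow x.2.2.2 (t - 1)) := by
  classical
  rw [biBracket, PowerSeries.coeff_mk, ← Finset.sum_product', ← Finset.sum_filter]
  refine Finset.sum_bij (fun p _ => ((p.1 0 : ℕ), (p.2 0 : ℕ), (p.1 1 : ℕ), (p.2 1 : ℕ)))
    ?_ ?_ ?_ ?_
  · rintro ⟨u, v⟩ h
    simp only [Finset.mem_filter, Fin.forall_fin_two, Fin.sum_univ_two] at h
    obtain ⟨-, hlt, hu, hv, h⟩ := h
    rw [Finset.mem_filter, mem_quads]
    exact ⟨⟨hu.1, hv.1, hu.2, hv.2, h⟩, hlt.1.2 (by simp)⟩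
  · rintro ⟨u, v⟩ _ ⟨u', v'⟩ _ h
    simp only [Prod.mk.injEq] at h
    refine Prod.ext ?_ ?_ <;> funext i <;> fin_cases i <;> apply Fin.ext
    exacts [h.1, h.2.2.1, h.2.1, h.2.2.2]
  · rintro ⟨a, b, c, d⟩ h
    rw [Finset.mem_filter, mem_quads] at h
    obtain ⟨⟨ha, hb, hc, hd, h⟩, hlt⟩ := h
    have h1 := Nat.le_mul_of_pos_right a hb
    have h2 := Nat.le_mul_of_pos_left b ha
    have h3 := Nat.le_mul_of_pos_right c hd
    have h4 := Nat.le_mul_of_pos_left d hc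
    refine ⟨(![⟨a, by omega⟩, ⟨c, by omega⟩], ![⟨b, by omega⟩, ⟨d, by omega⟩]), ?_, rfl⟩
    simp only at hlt
    simp only [Finset.mem_filter, Finset.mem_product, Finset.mem_univ, true_and,
      Fin.forall_fin_two, Fin.sum_univ_two]
    exact ⟨⟨⟨fun h0 => absurd h0 (lt_irrefl _), fun _ => hlt⟩,
      fun h0 => absurd h0 (by simp), fun h0 => absurd h0 (lt_irrefl _)⟩, ⟨ha, hc⟩, ⟨hb, hd⟩, h⟩
  · rintro ⟨u, v⟩ _
    simp [dpow]

lemma coeff_biBracket_mul (s1 s2 r1 r2 n : ℕ) :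
    PowerSeries.coeff n (biBracket ![s1] ![r1] * biBracket ![s2] ![r2]) =
      ∑ x ∈ quads n, dpow x.1 r1 * dpow x.2.1 (s1 - 1) *
        (dpow x.2.2.1 r2 * dpow x.2.2.2 (s2 - 1)) := by
  rw [PowerSeries.coeff_mul]
  simp only [coeff_biBracket_one_s3, Finset.sum_mul_sum]
  simp only [← Finset.sum_product']
  rw [Finset.sum_sigma']
  refine Finset.sum_bij (fun p _ => (p.2.1.1, p.2.1.2, p.2.2.1, p.2.2.2)) ?_ ?_ ?_ ?_
  · rintro ⟨⟨m, k⟩, ⟨⟨a, b⟩, ⟨c, d⟩⟩⟩ h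
    simp only [Finset.mem_sigma, Finset.HasAntidiagonal.mem_antidiagonal, Finset.mem_product,
      Nat.mem_divisorsAntidiagonal] at h
    obtain ⟨h, ⟨rfl, h1⟩, rfl, h2⟩ := h
    rw [mem_quads]
    simp only [ne_eq, mul_eq_zero, not_or] at h1 h2
    refine ⟨?_, ?_, ?_, ?_, h⟩ <;> simp only <;> omega
  · rintro ⟨⟨m, k⟩, ⟨⟨a, b⟩, ⟨c, d⟩⟩⟩ h ⟨⟨m', k'⟩, ⟨⟨a', b'⟩, ⟨c', d'⟩⟩⟩ h' he
    simp only [Finset.mem_sigma, Finset.HasAntidiagonal.mem_antidiagonal, Finset.mem_product,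
      Nat.mem_divisorsAntidiagonal] at h h'
    obtain ⟨h, ⟨rfl, h1⟩, rfl, h2⟩ := h
    obtain ⟨h, ⟨rfl, h1⟩, rfl, h2⟩ := h'
    simp only [Prod.mk.injEq] at he
    obtain ⟨rfl, rfl, rfl, rfl⟩ := he
    rfl
  · rintro ⟨a, b, c, d⟩ h
    obtain ⟨ha, hb, hc, hd, h⟩ := mem_quads.1 h
    refine ⟨⟨(a * b, c * d), ((a, b), (c, d))⟩, ?_, rfl⟩
    simp only [Finset.mem_sigma, Finset.HasAntidiagonal.mem_antidiagonal, Finset.mem_product,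
      Nat.mem_divisorsAntidiagonal]
    exact ⟨h, ⟨trivial, by positivity⟩, trivial, by positivity⟩
  · rintro ⟨⟨m, k⟩, ⟨⟨a, b⟩, ⟨c, d⟩⟩⟩ _
    rfl

/-! ### Splitting the product by comparing `v₁` and `v₂` -/

/-- The change of variables `u₁ v₁ + u₂ v₂ = (u₁ + u₂) v₂ + u₁ (v₁ - v₂)`. -/
lemma sum_quads_lt (n : ℕ) (f : ℕ → ℕ → ℕ → ℕ → ℚ) :
    ∑ x ∈ quads n with x.2.2.2 < x.2.1, f x.1 x.2.1 x.2.2.1 x.2.2.2 =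
      ∑ y ∈ quads n with y.2.2.1 < y.1,
        f y.2.2.1 (y.2.1 + y.2.2.2) (y.1 - y.2.2.1) y.2.1 := by
  refine Finset.sum_bij' (fun x _ => (x.1 + x.2.2.1, x.2.2.2, x.1, x.2.1 - x.2.2.2))
    (fun y _ => (y.2.2.1, y.2.1 + y.2.2.2, y.1 - y.2.2.1, y.2.1)) ?_ ?_ ?_ ?_ ?_
  · rintro ⟨a, b, c, d⟩ h
    rw [Finset.mem_filter, mem_quads] at h
    obtain ⟨⟨ha, hb, hc, hd, h⟩, hlt⟩ := h
    simp only at hlt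
    obtain ⟨e, rfl⟩ := Nat.exists_eq_add_of_lt hlt
    rw [Finset.mem_filter, mem_quads]
    refine ⟨⟨by omega, hd, ha, by simp only; omega, ?_⟩, by simp only; omega⟩
    rw [← h, show d + e + 1 - d = e + 1 by omega]
    ring
  · rintro ⟨a, b, c, d⟩ h
    rw [Finset.mem_filter, mem_quads] at h
    obtain ⟨⟨ha, hb, hc, hd, h⟩, hlt⟩ := h
    simp only at hlt
    obtain ⟨e, rfl⟩ := Nat.exists_eq_add_of_lt hlt
    rw [Finset.mem_filter, mem_quads]
    refine ⟨⟨hc, by simp only; omega, by simp only; omega, hb, ?_⟩, by simp only; omega⟩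
    rw [← h, show c + e + 1 - c = e + 1 by omega]
    ring
  · rintro ⟨a, b, c, d⟩ h
    rw [Finset.mem_filter, mem_quads] at h
    simp only [Prod.mk.injEq, true_and, and_true] at h ⊢
    omega
  · rintro ⟨a, b, c, d⟩ h
    rw [Finset.mem_filter, mem_quads] at h
    simp only [Prod.mk.injEq, true_and] at h ⊢
    omega
  · rintro ⟨a, b, c, d⟩ h
    rw [Finset.mem_filter, mem_quads] at h
    simp only at h ⊢
    congr 1 <;> omega

lemma sum_quads_swap (n : ℕ) (f : ℕ → ℕ → ℕ → ℕ → ℚ) :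
    ∑ x ∈ quads n with x.2.1 < x.2.2.2, f x.1 x.2.1 x.2.2.1 x.2.2.2 =
      ∑ x ∈ quads n with x.2.2.2 < x.2.1, f x.2.2.1 x.2.2.2 x.1 x.2.1 := by
  refine Finset.sum_bij' (fun x _ => (x.2.2.1, x.2.2.2, x.1, x.2.1))
    (fun x _ => (x.2.2.1, x.2.2.2, x.1, x.2.1)) ?_ ?_ (fun _ _ => rfl) (fun _ _ => rfl)
    (fun _ _ => rfl)
  all_goals
    rintro ⟨a, b, c, d⟩ h
    rw [Finset.mem_filter, mem_quads] at h ⊢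
    obtain ⟨⟨ha, hb, hc, hd, h⟩, hlt⟩ := h
    exact ⟨⟨hc, hd, ha, hb, by rw [← h, add_comm]⟩, hlt⟩

/-- Substitution `U = u₁ + u₂`, `v = v₁ = v₂`, `u = u₁` on the diagonal part. -/
lemma sum_quads_eq (n : ℕ) (f : ℕ → ℕ → ℕ → ℕ → ℚ) :
    ∑ x ∈ quads n with x.2.1 = x.2.2.2, f x.1 x.2.1 x.2.2.1 x.2.2.2 =
      ∑ y ∈ n.divisorsAntidiagonal, ∑ u ∈ Ico 1 y.1, f u y.2 (y.1 - u) y.2 := by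
  rw [Finset.sum_sigma']
  refine Finset.sum_bij' (fun x _ => ⟨(x.1 + x.2.2.1, x.2.1), x.1⟩)
    (fun y _ => (y.2, y.1.2, y.1.1 - y.2, y.1.2)) ?_ ?_ ?_ ?_ ?_
  · rintro ⟨a, b, c, d⟩ h
    rw [Finset.mem_filter, mem_quads] at h
    obtain ⟨⟨ha, hb, hc, hd, h⟩, hlt⟩ := h
    simp only at hlt
    subst hlt
    simp only [Finset.mem_sigma, Nat.mem_divisorsAntidiagonal, Finset.mem_Ico]
    have := Nat.mul_pos ha hb
    refine ⟨⟨by rw [← h]; ring, by omega⟩, by omega, by omega⟩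
  · rintro ⟨⟨U, v⟩, u⟩ h
    simp only [Finset.mem_sigma, Nat.mem_divisorsAntidiagonal, Finset.mem_Ico] at h
    obtain ⟨⟨rfl, hn⟩, hu, hlt⟩ := h
    simp only [ne_eq, mul_eq_zero, not_or] at hn
    rw [Finset.mem_filter, mem_quads]
    refine ⟨⟨hu, by simp only; omega, by simp only; omega, by simp only; omega, ?_⟩, rfl⟩
    simp only
    rw [← add_mul]
    congr 1
    omega
  · rintro ⟨a, b, c, d⟩ h
    rw [Finset.mem_filter, mem_quads] at h
    simp only [Prod.mk.injEq, true_and] at h ⊢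
    omega
  · rintro ⟨⟨U, v⟩, u⟩ h
    simp only [Finset.mem_sigma, Nat.mem_divisorsAntidiagonal, Finset.mem_Ico] at h
    simp only
    rw [Nat.add_sub_cancel' h.2.2.le]
  · rintro ⟨a, b, c, d⟩ h
    rw [Finset.mem_filter, mem_quads] at h
    simp only at h ⊢
    rw [h.2, Nat.add_sub_cancel_left]

lemma sum_quads_split (n : ℕ) (f : ℕ × ℕ × ℕ × ℕ → ℚ) :
    ∑ x ∈ quads n, f x = ∑ x ∈ quads n with x.2.2.2 < x.2.1, f x
      + ∑ x ∈ quads n with x.2.1 < x.2.2.2, f x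
      + ∑ x ∈ quads n with x.2.1 = x.2.2.2, f x := by
  simp only [Finset.sum_filter]
  rw [← Finset.sum_add_distrib, ← Finset.sum_add_distrib]
  refine Finset.sum_congr rfl fun x _ => ?_
  rcases lt_trichotomy x.2.1 x.2.2.2 with h | h | h
  · simp [h, h.not_gt, h.ne]
  · simp [h]
  · simp [h, h.not_gt, h.ne']

/-- The summand after the change of variables of `sum_quads_lt`, with `(U₁, V₁, U₂, V₂)` equal to
`(a, b, c, d)`, as a combination of summands of length-two brackets. -/
lemma dpow_expand (s1 s2 r1 r2 : ℕ) (h1 : 1 ≤ s1) (h2 : 1 ≤ s2) (a b c d : ℚ) :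
    dpow c r1 * dpow (b + d) (s1 - 1) * (dpow (a - c) r2 * dpow b (s2 - 1)) =
      ∑ j ∈ Icc 1 s1, ∑ k ∈ range (r2 + 1),
        (((s1 + s2 - j - 1).choose (s1 - j) : ℚ) * ((r1 + r2 - k).choose r1) *
          (-1 : ℚ) ^ (r2 - k)) *
        (dpow a k * dpow b (s1 + s2 - j - 1) * (dpow c (r1 + r2 - k) * dpow d (j - 1))) := by
  have e1 : dpow (b + d) (s1 - 1) * dpow b (s2 - 1) = ∑ j ∈ Icc 1 s1,
      ((s1 + s2 - j - 1).choose (s1 - j) : ℚ) * (dpow b (s1 + s2 - j - 1) * dpow d (j - 1)) := by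
    rw [add_comm b d, dpow_add, Finset.sum_mul, Nat.sub_add_cancel h1,
      ← Finset.Ico_succ_right_eq_Icc, Finset.sum_Ico_eq_sum_range]
    refine Finset.sum_congr (by simp) fun j hj => ?_
    have hj' : j < s1 := by simpa using hj
    have h := dpow_mul b (s1 - 1 - j) (s2 - 1)
    rw [show s1 - 1 - j + (s2 - 1) = s1 + s2 - (1 + j) - 1 by omega] at h
    rw [show s1 - (1 + j) = s1 - 1 - j by omega, show 1 + j - 1 = j by omega]
    linear_combination dpow d j * h
  have e2 : dpow c r1 * dpow (a - c) r2 = ∑ k ∈ range (r2 + 1),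
      ((r1 + r2 - k).choose r1 : ℚ) * (-1 : ℚ) ^ (r2 - k) *
        (dpow a k * dpow c (r1 + r2 - k)) := by
    rw [sub_eq_add_neg, dpow_add, Finset.mul_sum]
    refine Finset.sum_congr rfl fun k hk => ?_
    have hk' : k < r2 + 1 := by simpa using hk
    have h := dpow_mul c r1 (r2 - k)
    rw [show r1 + (r2 - k) = r1 + r2 - k by omega] at h
    rw [dpow_neg]
    linear_combination dpow a k * (-1) ^ (r2 - k) * h
  calc _ = (dpow (b + d) (s1 - 1) * dpow b (s2 - 1)) * (dpow c r1 * dpow (a - c) r2) := by ring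
    _ = _ := by
      rw [e1, e2, Finset.sum_mul_sum]
      exact Finset.sum_congr rfl fun j _ => Finset.sum_congr rfl fun k _ => by ring

/-- The part `v₂ < v₁` of the product is a combination of length-two brackets. -/
lemma sum_quads_lt_eq (n s1 s2 r1 r2 : ℕ) (h1 : 1 ≤ s1) (h2 : 1 ≤ s2) :
    ∑ x ∈ quads n with x.2.2.2 < x.2.1, dpow x.1 r1 * dpow x.2.1 (s1 - 1) *
        (dpow x.2.2.1 r2 * dpow x.2.2.2 (s2 - 1)) =
      ∑ j ∈ Icc 1 s1, ∑ k ∈ range (r2 + 1),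
        (((s1 + s2 - j - 1).choose (s1 - j) : ℚ) * ((r1 + r2 - k).choose r1) *
          (-1 : ℚ) ^ (r2 - k)) *
        PowerSeries.coeff n (biBracket ![s1 + s2 - j, j] ![k, r1 + r2 - k]) := by
  rw [sum_quads_lt n fun a b c d => dpow a r1 * dpow b (s1 - 1) * (dpow c r2 * dpow d (s2 - 1))]
  simp only [coeff_biBracket_two_s3, Finset.mul_sum]
  rw [Finset.sum_congr rfl fun j _ => Finset.sum_comm, Finset.sum_comm]
  refine Finset.sum_congr rfl fun y hy => ?_
  rw [Nat.cast_sub (Finset.mem_filter.1 hy).2.le, Nat.cast_add, dpow_expand s1 s2 r1 r2 h1 h2]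

/-- The part `v₁ = v₂` of the product is a combination of length-one brackets. -/
lemma sum_quads_diag_eq (n s1 s2 r1 r2 : ℕ) (h1 : 1 ≤ s1) (h2 : 1 ≤ s2) :
    ∑ x ∈ quads n with x.2.1 = x.2.2.2, dpow x.1 r1 * dpow x.2.1 (s1 - 1) *
        (dpow x.2.2.1 r2 * dpow x.2.2.2 (s2 - 1)) =
      ((s1 + s2 - 2).choose (s1 - 1) : ℚ) *
        PowerSeries.coeff n (biBracket ![s1 + s2 - 1] ![r1 + r2 + 1])
      + ((s1 + s2 - 2).choose (s1 - 1) : ℚ) * ∑ j ∈ range (r1 + 1),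
          ((-1 : ℚ) ^ r2 * bernoulli (r1 + r2 - j + 1) / (r1 + r2 - j + 1).factorial *
            ((r1 + r2 - j).choose (r1 - j))) *
            PowerSeries.coeff n (biBracket ![s1 + s2 - 1] ![j])
      + ((s1 + s2 - 2).choose (s1 - 1) : ℚ) * ∑ j ∈ range (r2 + 1),
          ((-1 : ℚ) ^ r1 * bernoulli (r1 + r2 - j + 1) / (r1 + r2 - j + 1).factorial *
            ((r1 + r2 - j).choose (r2 - j))) *
            PowerSeries.coeff n (biBracket ![s1 + s2 - 1] ![j]) := by
  rw [sum_quads_eq n fun a b c d => dpow a r1 * dpow b (s1 - 1) * (dpow c r2 * dpow d (s2 - 1))]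
  simp only [coeff_biBracket_one_s3]
  have hswap : ∀ (N : ℕ) (w : ℕ → ℚ), ∑ j ∈ range N, w j *
      ∑ x ∈ n.divisorsAntidiagonal, dpow x.1 j * dpow x.2 (s1 + s2 - 1 - 1) =
      ∑ x ∈ n.divisorsAntidiagonal,
        (∑ j ∈ range N, w j * dpow x.1 j) * dpow x.2 (s1 + s2 - 1 - 1) := by
    intro N w
    simp only [Finset.mul_sum, Finset.sum_mul]
    rw [Finset.sum_comm]
    exact Finset.sum_congr rfl fun x _ => Finset.sum_congr rfl fun j _ => by ring
  rw [hswap, hswap]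
  simp only [← mul_add, ← Finset.sum_add_distrib]
  rw [Finset.mul_sum]
  refine Finset.sum_congr rfl fun x hx => ?_
  have hU : 1 ≤ x.1 := by
    obtain ⟨h, hn⟩ := Nat.mem_divisorsAntidiagonal.1 hx
    rcases Nat.eq_zero_or_pos x.1 with h0 | h0
    · rw [h0, zero_mul] at h; omega
    · exact h0
  have hv := dpow_mul x.2 (s1 - 1) (s2 - 1)
  rw [show s1 - 1 + (s2 - 1) = s1 + s2 - 2 by omega] at hv
  have hsum := sum_dpow_mul_dpow x.1 hU r1 r2
  have hl : ∑ u ∈ Ico 1 x.1, dpow u r1 * dpow x.2 (s1 - 1) *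
      (dpow ((x.1 - u : ℕ) : ℚ) r2 * dpow x.2 (s2 - 1)) =
      (∑ u ∈ Ico 1 x.1, dpow u r1 * dpow (x.1 - u : ℚ) r2) *
        (dpow x.2 (s1 - 1) * dpow x.2 (s2 - 1)) := by
    rw [Finset.sum_mul]
    refine Finset.sum_congr rfl fun u hu => ?_
    rw [Nat.cast_sub (Finset.mem_Ico.1 hu).2.le]
    ring
  rw [hl, hv, hsum, show s1 + s2 - 1 - 1 = s1 + s2 - 2 by omega]
  ring

/-! ### The shuffle product -/

/-- Shuffle product analogue for bi-brackets in length one.  (`bernoulli` is Mathlib's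
Bernoulli number with `B_1 = −1/2`.) -/
theorem biBracket_shuffle (s1 s2 : ℕ) (h1 : 1 ≤ s1) (h2 : 1 ≤ s2) (r1 r2 : ℕ) :
    biBracket ![s1] ![r1] * biBracket ![s2] ![r2] =
      (∑ j ∈ Finset.Icc 1 s1, ∑ k ∈ Finset.range (r2 + 1),
        (((s1 + s2 - j - 1).choose (s1 - j) : ℚ) * ((r1 + r2 - k).choose r1) *
          (-1 : ℚ) ^ (r2 - k)) • biBracket ![s1 + s2 - j, j] ![k, r1 + r2 - k])
      + (∑ j ∈ Finset.Icc 1 s2, ∑ k ∈ Finset.range (r1 + 1),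
        (((s1 + s2 - j - 1).choose (s1 - 1) : ℚ) * ((r1 + r2 - k).choose (r1 - k)) *
          (-1 : ℚ) ^ (r1 - k)) • biBracket ![s1 + s2 - j, j] ![k, r1 + r2 - k])
      + (((s1 + s2 - 2).choose (s1 - 1) : ℚ)) • biBracket ![s1 + s2 - 1] ![r1 + r2 + 1]
      + (((s1 + s2 - 2).choose (s1 - 1) : ℚ)) • ∑ j ∈ Finset.range (r1 + 1),
          ((-1 : ℚ) ^ r2 * bernoulli (r1 + r2 - j + 1) / (r1 + r2 - j + 1).factorial *
            ((r1 + r2 - j).choose (r1 - j))) • biBracket ![s1 + s2 - 1] ![j]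
      + (((s1 + s2 - 2).choose (s1 - 1) : ℚ)) • ∑ j ∈ Finset.range (r2 + 1),
          ((-1 : ℚ) ^ r1 * bernoulli (r1 + r2 - j + 1) / (r1 + r2 - j + 1).factorial *
            ((r1 + r2 - j).choose (r2 - j))) • biBracket ![s1 + s2 - 1] ![j] := by
  ext n
  rw [coeff_biBracket_mul, sum_quads_split, sum_quads_lt_eq n s1 s2 r1 r2 h1 h2,
    sum_quads_diag_eq n s1 s2 r1 r2 h1 h2,
    sum_quads_swap n fun a b c d => dpow a r1 * dpow b (s1 - 1) * (dpow c r2 * dpow d (s2 - 1))]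
  simp only [mul_comm (dpow _ r1 * dpow _ (s1 - 1))]
  rw [sum_quads_lt_eq n s2 s1 r2 r1 h2 h1]
  simp only [map_add, map_sum, map_smul, smul_eq_mul, ← add_assoc]
  congr 3
  congr 1
  refine Finset.sum_congr rfl fun j hj => Finset.sum_congr rfl fun k hk => ?_
  have hj' := Finset.mem_Icc.1 hj
  have hk' := Finset.mem_range.1 hk
  have e1 : (s1 + s2 - j - 1).choose (s2 - j) = (s1 + s2 - j - 1).choose (s1 - 1) :=
    Nat.choose_symm_of_eq_add (by omega)
  have e2 : (r1 + r2 - k).choose r2 = (r1 + r2 - k).choose (r1 - k) :=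
    Nat.choose_symm_of_eq_add (by omega)
  rw [Nat.add_comm s2 s1, Nat.add_comm r2 r1, e1, e2]
end

section
/- For all integers s1, s2 ≥ 1, the bi-brackets [s1, s2; 1, 0] and [s1, s2; 0, 1] each lie in the ℚ-linear span of 1 and all brackets [a1,…,ar] with r ≤ 3 and a1+⋯+ar ≤ s1+s2+1. -/
/-!
Let `Z1`, `Z2`, `Z3` denote sums over `u₁ > ⋯ > u_l > 0`, `v_j > 0` of an arbitrary summand
`f(u, v)` times `q^{∑ u_j v_j}`. Two identities drive the proof.

* Quasi-shuffle (`mul11`, `mul12`): a product with a sum of length one is expanded by the relative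
  order of the `u`s. When two `u`s coincide, their `v`s are added, leaving an inner sum over the ways
  of splitting `v`. For monomials in the `v`s this inner sum is a polynomial in `v` (`convSum`), so
  products of brackets are combinations of brackets (`stuffle11`, `stuffle12`).
* Conjugation (`conj1`, `conj2`, `conj3`): the data `(u, v)` describe a partition with `v_j` parts
  equal to `u_j`, and passing to the conjugate partition exchanges the roles of `u` and `v`.

Expand `[1] · [s₁, s₂]` in a second way, by conjugating both factors, applying the quasi-shuffle
product, and conjugating each term back. The terms of length three become brackets again. The merged
terms contain an inner sum of `v₁ - 1`, respectively `v₂ - 1`, equal summands; after conjugation these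
are the factors `u₂ - 1` and `u₁ - u₂ - 1`, whose sum is `u₁ - 2`. Comparing with the ordinary stuffle
expansion expresses `[s₁, s₂; 1, 0]` through brackets of length at most three and weight at most
`s₁ + s₂ + 1` (`Z2_u₁_mem`). The same argument for `[1] · [s]` expresses `[s; 1]` through brackets of
length at most two (`Z1_u_mem`).

Finally the quasi-shuffle product `[s₁] · [s₂; 1]` equals
`[s₁, s₂; 0, 1] + [s₂, s₁; 1, 0]` plus a combination of bi-brackets `[k; 1]`. By the above everything
except `[s₁, s₂; 0, 1]` is in the span, hence so is `[s₁, s₂; 0, 1]` (`Z2_u₂_mem`).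
-/

open Finset

/-- The bracket `[s₁,…,s_l] ∈ ℚ⟦q⟧` (for `l = 0` this is `1`). -/
noncomputable def bracket {l : ℕ} (s : Fin l → ℕ) : PowerSeries ℚ :=
  biBracket s 0

/-! ### Generating series over weighted index sets -/

/-- The generating series `∑_{p ∈ A} f p · q^{w p}`. The coefficients are `finsum`s, so they are
meaningful when `A` has finite fibres over `w`, see `FinFib`. -/
noncomputable def gen {α : Type*} (A : Set α) (w : α → ℕ) (f : α → ℚ) : PowerSeries ℚ :=
  PowerSeries.mk fun n => ∑ᶠ p ∈ A ∩ w ⁻¹' {n}, f p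

/-- `A` has finitely many points of each weight. -/
def FinFib {α : Type*} (A : Set α) (w : α → ℕ) : Prop := ∀ n, (A ∩ w ⁻¹' {n}).Finite

section gen
variable {α β : Type*} {A B : Set α} {C : Set β} {w : α → ℕ} {w' : β → ℕ}

lemma gen_congr {f g : α → ℚ} (h : ∀ p ∈ A, f p = g p) : gen A w f = gen A w g := by
  ext n
  simp only [gen, PowerSeries.coeff_mk]
  exact finsum_mem_congr rfl fun p hp => h p hp.1

lemma gen_add (hA : FinFib A w) (f g : α → ℚ) :
    gen A w (fun p => f p + g p) = gen A w f + gen A w g := by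
  ext n
  simp only [gen, PowerSeries.coeff_mk, map_add]
  exact finsum_mem_add_distrib (hA n)

lemma gen_smul (c : ℚ) (f : α → ℚ) :
    gen A w (fun p => c * f p) = c • gen A w f := by
  ext n
  simp only [gen, PowerSeries.coeff_mk, map_smul, smul_eq_mul]
  exact (mul_finsum_mem _ c).symm

lemma gen_sum (hA : FinFib A w) {ι : Type*} (s : Finset ι) (f : ι → α → ℚ) :
    gen A w (fun p => ∑ i ∈ s, f i p) = ∑ i ∈ s, gen A w (f i) := by
  classical
  induction s using Finset.induction_on with
  | empty => ext n; simp [gen]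
  | insert a s ha ih =>
    simp only [Finset.sum_insert ha]
    rw [gen_add hA, ih]

lemma gen_union (hA : FinFib A w) (hB : FinFib B w) (hAB : Disjoint A B) (f : α → ℚ) :
    gen (A ∪ B) w f = gen A w f + gen B w f := by
  ext n
  simp only [gen, PowerSeries.coeff_mk, map_add, Set.union_inter_distrib_right]
  exact finsum_mem_union (hAB.mono Set.inter_subset_left Set.inter_subset_left) (hA n) (hB n)

/-- Change of summation variable along a weight-preserving bijection, whose inverse is given explicitly. -/
lemma gen_bij (e : α → β) (e' : β → α) (h1 : ∀ p ∈ A, e p ∈ C) (h2 : ∀ q ∈ C, e' q ∈ A)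
    (h3 : ∀ p ∈ A, e' (e p) = p) (h4 : ∀ q ∈ C, e (e' q) = q)
    (hw : ∀ p ∈ A, w' (e p) = w p) {f : α → ℚ} {g : β → ℚ} (hf : ∀ p ∈ A, f p = g (e p)) :
    gen A w f = gen C w' g := by
  ext n
  simp only [gen, PowerSeries.coeff_mk]
  refine finsum_mem_eq_of_bijOn e (Set.InvOn.bijOn (f' := e') ⟨?_, ?_⟩ ?_ ?_) ?_
  · exact fun p hp => h3 p hp.1
  · exact fun p hp => h4 p hp.1
  · rintro p ⟨hp, hn⟩
    exact ⟨h1 p hp, by simpa [hw p hp] using hn⟩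
  · rintro q ⟨hq, hn⟩
    refine ⟨h2 q hq, ?_⟩
    have := hw _ (h2 q hq)
    rw [h4 q hq] at this
    simpa [← this] using hn
  · exact fun p hp => hf p hp.1

lemma gen_mul (hA : FinFib A w) (hC : FinFib C w') (f : α → ℚ) (g : β → ℚ) :
    gen A w f * gen C w' g =
      gen (A ×ˢ C) (fun p => w p.1 + w' p.2) (fun p => f p.1 * g p.2) := by
  classical
  ext n
  have hfin : ((A ×ˢ C) ∩ (fun p : α × β => w p.1 + w' p.2) ⁻¹' {n}).Finite := by
    refine Set.Finite.subset ((Finset.HasAntidiagonal.antidiagonal n).finite_toSet.biUnion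
      fun ij _ => (hA ij.1).prod (hC ij.2)) ?_
    rintro ⟨p, q⟩ ⟨⟨hp, hq⟩, hn⟩
    simp only [Set.mem_iUnion]
    exact ⟨(w p, w' q), by simpa using hn, ⟨hp, rfl⟩, ⟨hq, rfl⟩⟩
  rw [PowerSeries.coeff_mul]
  simp only [gen, PowerSeries.coeff_mk]
  rw [finsum_mem_eq_finite_toFinset_sum _ hfin,
    ← Finset.sum_fiberwise_of_maps_to (t := Finset.HasAntidiagonal.antidiagonal n)
      (g := fun p : α × β => (w p.1, w' p.2))]
  · refine Finset.sum_congr rfl fun ij hij => ?_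
    rw [finsum_mem_eq_finite_toFinset_sum _ (hA ij.1), finsum_mem_eq_finite_toFinset_sum _ (hC ij.2),
      Finset.sum_mul_sum, ← Finset.sum_product']
    refine Finset.sum_congr ?_ fun _ _ => rfl
    obtain ⟨i, j⟩ := ij
    ext ⟨p, q⟩
    simp at hij ⊢
    grind
  · rintro ⟨p, q⟩ h
    simp at h ⊢
    exact h.2

/-- Summing out a variable `i` on which the exponent does not depend. -/
lemma gen_sigma (hA : FinFib A w) (I : α → Finset ℕ) (f : α → ℕ → ℚ) :
    gen {p : α × ℕ | p.1 ∈ A ∧ p.2 ∈ I p.1} (fun p => w p.1) (fun p => f p.1 p.2) =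
      gen A w (fun p => ∑ i ∈ I p, f p i) := by
  classical
  ext n
  simp only [gen, PowerSeries.coeff_mk]
  rw [finsum_mem_eq_finite_toFinset_sum _ (hA n), Finset.sum_sigma', ← finsum_mem_coe_finset]
  refine finsum_mem_eq_of_bijOn (fun p => ⟨p.1, p.2⟩)
    (Set.InvOn.bijOn (f' := fun p => (p.1, p.2)) ⟨?_, ?_⟩ ?_ ?_) ?_
  · intro _ _; rfl
  · intro _ _; rfl
  · rintro ⟨p, i⟩ h
    simp at h ⊢
    tauto
  · rintro ⟨p, i⟩ h
    simp at h ⊢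
    tauto
  · intro _ _; rfl

end gen

/-! ### Sums of length one, two and three -/

/-- Pairs `(u, v)` of positive integers. -/
def S1 : Set (ℕ × ℕ) := {p | 0 < p.1 ∧ 0 < p.2}
/-- The exponent `u v` of `q`. -/
def W1 (p : ℕ × ℕ) : ℕ := p.1 * p.2
/-- Quadruples `(u₁, v₁, u₂, v₂)` of positive integers with `u₁ > u₂`. -/
def S2 : Set (ℕ × ℕ × ℕ × ℕ) := {p | 0 < p.2.1 ∧ p.2.2.1 < p.1 ∧ p.2.2 ∈ S1}
/-- The exponent `u₁ v₁ + u₂ v₂` of `q`. -/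
def W2 (p : ℕ × ℕ × ℕ × ℕ) : ℕ := p.1 * p.2.1 + W1 p.2.2
/-- Sextuples `(u₁, v₁, u₂, v₂, u₃, v₃)` of positive integers with `u₁ > u₂ > u₃`. -/
def S3 : Set (ℕ × ℕ × ℕ × ℕ × ℕ × ℕ) := {p | 0 < p.2.1 ∧ p.2.2.1 < p.1 ∧ p.2.2 ∈ S2}
/-- The exponent `u₁ v₁ + u₂ v₂ + u₃ v₃` of `q`. -/
def W3 (p : ℕ × ℕ × ℕ × ℕ × ℕ × ℕ) : ℕ := p.1 * p.2.1 + W2 p.2.2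

lemma finFib_S1 : FinFib S1 W1 := by
  intro n
  refine (Set.finite_Iic (n, n)).subset ?_
  rintro ⟨u, v⟩ ⟨⟨hu, hv⟩, hn⟩
  simp only [W1, Set.mem_preimage, Set.mem_singleton_iff] at hn hu hv
  simp only [Set.mem_Iic, Prod.mk_le_mk]
  constructor <;> nlinarith

/-- Prepending a pair `(u, v)` of positive integers with exponent `u v` preserves finiteness of
fibres. -/
lemma finFib_cons {α : Type*} {A : Set α} {w : α → ℕ} (hA : FinFib A w) {B : Set (ℕ × ℕ × α)}
    (hB : ∀ p ∈ B, 0 < p.1 ∧ 0 < p.2.1 ∧ p.2.2 ∈ A) :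
    FinFib B (fun p => p.1 * p.2.1 + w p.2.2) := by
  intro n
  have h : (⋃ i ∈ Set.Iic n, A ∩ w ⁻¹' {i}).Finite := (Set.finite_Iic n).biUnion fun i _ => hA i
  refine ((Set.finite_Iic n).prod ((Set.finite_Iic n).prod h)).subset ?_
  rintro ⟨u, v, a⟩ ⟨hp, hn⟩
  obtain ⟨hu, hv, ha⟩ := hB _ hp
  simp only [Set.mem_preimage, Set.mem_singleton_iff] at hn hu hv ha
  refine ⟨?_, ?_, ?_⟩
  · show u ≤ n
    nlinarith
  · show v ≤ n
    nlinarith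
  · simp only [Set.mem_iUnion]
    exact ⟨w a, by simp; omega, ha, rfl⟩

lemma finFib_S2 : FinFib S2 W2 :=
  finFib_cons finFib_S1 fun _ h => ⟨by have := h.2.1; omega, h.1, h.2.2⟩

lemma finFib_S3 : FinFib S3 W3 :=
  finFib_cons finFib_S2 fun _ h => ⟨by have := h.2.1; omega, h.1, h.2.2⟩

lemma FinFib.mono {α : Type*} {A B : Set α} {w : α → ℕ} (hB : FinFib B w) (h : A ⊆ B) :
    FinFib A w := fun n => (hB n).subset (Set.inter_subset_inter_left _ h)

/-- `∑_{u, v > 0} f(u, v) q^{uv}`. -/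
noncomputable def Z1 (f : ℕ → ℕ → ℚ) : PowerSeries ℚ := gen S1 W1 fun p => f p.1 p.2
/-- `∑ f(u₁, v₁, u₂, v₂) q^{u₁v₁ + u₂v₂}` over positive integers with `u₁ > u₂`. -/
noncomputable def Z2 (f : ℕ → ℕ → ℕ → ℕ → ℚ) : PowerSeries ℚ :=
  gen S2 W2 fun p => f p.1 p.2.1 p.2.2.1 p.2.2.2
/-- `∑ f(u₁, v₁, u₂, v₂, u₃, v₃) q^{u₁v₁ + u₂v₂ + u₃v₃}` over positive integers with
`u₁ > u₂ > u₃`. -/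
noncomputable def Z3 (f : ℕ → ℕ → ℕ → ℕ → ℕ → ℕ → ℚ) : PowerSeries ℚ :=
  gen S3 W3 fun p => f p.1 p.2.1 p.2.2.1 p.2.2.2.1 p.2.2.2.2.1 p.2.2.2.2.2

/-! ### Conjugation of partitions -/

/-- A term with data `(u, v)` corresponds to the partition of `uv` into `v` parts equal to `u`;
conjugation swaps the two. -/
lemma conj1 (f : ℕ → ℕ → ℚ) : Z1 (fun u v => f v u) = Z1 f := by
  refine gen_bij (fun p => (p.2, p.1)) (fun p => (p.2, p.1)) ?_ ?_ ?_ ?_ ?_ ?_ <;>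
    rintro ⟨u, v⟩ <;> simp [S1, W1] <;> intros <;> first | omega | ring

/-- Conjugation of a partition with `v₁` parts `u₁` and `v₂` parts `u₂`: the conjugate has parts
`v₁ + v₂` and `v₁`, with multiplicities `u₂` and `u₁ - u₂`. -/
lemma conj2 (f : ℕ → ℕ → ℕ → ℕ → ℚ) :
    Z2 (fun u₁ v₁ u₂ v₂ => f (v₁ + v₂) u₂ v₁ (u₁ - u₂)) = Z2 f := by
  refine gen_bij (fun (u₁, v₁, u₂, v₂) => (v₁ + v₂, u₂, v₁, u₁ - u₂))
    (fun (u₁, v₁, u₂, v₂) => (v₁ + v₂, u₂, v₁, u₁ - u₂)) ?_ ?_ ?_ ?_ ?_ ?_ <;>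
    rintro ⟨u₁, v₁, u₂, v₂⟩ h <;> simp [S1, W1, S2, W2] at h ⊢
  · omega
  · omega
  · omega
  · omega
  · obtain ⟨d, rfl⟩ := Nat.exists_eq_add_of_lt h.2.1
    rw [show u₂ + d + 1 - u₂ = d + 1 by omega]
    ring

/-- Conjugation of a partition with three distinct part sizes. -/
lemma conj3 (f : ℕ → ℕ → ℕ → ℕ → ℕ → ℕ → ℚ) :
    Z3 (fun u₁ v₁ u₂ v₂ u₃ v₃ => f (v₁ + v₂ + v₃) u₃ (v₁ + v₂) (u₂ - u₃) v₁ (u₁ - u₂)) =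
      Z3 f := by
  refine gen_bij
    (fun (u₁, v₁, u₂, v₂, u₃, v₃) => (v₁ + v₂ + v₃, u₃, v₁ + v₂, u₂ - u₃, v₁, u₁ - u₂))
    (fun (u₁, v₁, u₂, v₂, u₃, v₃) => (v₁ + v₂ + v₃, u₃, v₁ + v₂, u₂ - u₃, v₁, u₁ - u₂))
    ?_ ?_ ?_ ?_ ?_ ?_ <;>
    rintro ⟨u₁, v₁, u₂, v₂, u₃, v₃⟩ h <;> simp [S1, W1, S2, W2, S3, W3] at h ⊢
  · omega
  · omega
  · omega
  · omega
  · obtain ⟨d, rfl⟩ := Nat.exists_eq_add_of_lt h.2.2.2.1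
    obtain ⟨d', rfl⟩ := Nat.exists_eq_add_of_lt h.2.1
    rw [show u₃ + d + 1 - u₃ = d + 1 by omega,
      show u₃ + d + 1 + d' + 1 - (u₃ + d + 1) = d' + 1 by omega]
    ring

/-! ### Quasi-shuffle products -/

/-- The product of two sums of length one, split according to `u > u'`, `u < u'` and `u = u'`. In
the last case the two multiplicities are merged into `v`, which leaves an inner sum over the ways of
splitting `v` into positive summands. -/
lemma mul11 (f g : ℕ → ℕ → ℚ) :
    Z1 f * Z1 g = Z2 (fun u₁ v₁ u₂ v₂ => f u₁ v₁ * g u₂ v₂) +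
      Z2 (fun u₁ v₁ u₂ v₂ => f u₂ v₂ * g u₁ v₁) +
      Z1 (fun u v => ∑ i ∈ Finset.Ico 1 v, f u i * g u (v - i)) := by
  have hP : FinFib (S1 ×ˢ S1) (fun p => W1 p.1 + W1 p.2) := by
    have := finFib_cons (B := {p : ℕ × ℕ × ℕ × ℕ | 0 < p.1 ∧ 0 < p.2.1 ∧ p.2.2 ∈ S1}) finFib_S1
      fun _ h => h
    intro n
    refine ((this n).preimage
      (f := fun p : (ℕ × ℕ) × ℕ × ℕ => (p.1.1, p.1.2, p.2)) ?_).subset ?_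
    · rintro ⟨⟨_, _⟩, _⟩ _ ⟨⟨_, _⟩, _⟩ _ h
      simpa [Prod.ext_iff, and_assoc] using h
    · rintro ⟨⟨_, _⟩, _⟩ ⟨h, hn⟩
      exact ⟨⟨h.1.1, h.1.2, h.2⟩, hn⟩
  rw [Z1, Z1, gen_mul finFib_S1 finFib_S1]
  have hS : (S1 ×ˢ S1 : Set ((ℕ × ℕ) × ℕ × ℕ)) =
      ({p ∈ S1 ×ˢ S1 | p.2.1 < p.1.1} ∪ {p ∈ S1 ×ˢ S1 | p.1.1 < p.2.1}) ∪
        {p ∈ S1 ×ˢ S1 | p.1.1 = p.2.1} := by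
    ext p
    simp only [Set.mem_union, Set.mem_ofPred_eq]
    have := lt_trichotomy p.1.1 p.2.1
    tauto
  rw [hS, gen_union, gen_union]
  · congr 1
    · congr 1
      · refine gen_bij (fun ((u₁, v₁), u₂, v₂) => (u₁, v₁, u₂, v₂))
          (fun (u₁, v₁, u₂, v₂) => ((u₁, v₁), u₂, v₂)) ?_ ?_ ?_ ?_ ?_ ?_
        · rintro ⟨⟨_, _⟩, _, _⟩ h; simp [S1, S2] at h ⊢; omega
        · rintro ⟨_, _, _, _⟩ h; simp [S1, S2] at h ⊢; omega
        all_goals intros; rfl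
      · refine gen_bij (fun ((u₂, v₂), u₁, v₁) => (u₁, v₁, u₂, v₂))
          (fun (u₁, v₁, u₂, v₂) => ((u₂, v₂), u₁, v₁)) ?_ ?_ ?_ ?_ ?_ ?_
        · rintro ⟨⟨_, _⟩, _, _⟩ h; simp [S1, S2] at h ⊢; omega
        · rintro ⟨_, _, _, _⟩ h; simp [S1, S2] at h ⊢; omega
        · intros; rfl
        · intros; rfl
        · intros; simp [W1, W2]; ring
        · intros; rfl
    · rw [Z1, ← gen_sigma finFib_S1 (fun p => Finset.Ico 1 p.2)
        (fun p i => f p.1 i * g p.1 (p.2 - i))]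
      refine gen_bij (fun ((u, i), _, j) => ((u, i + j), i))
          (fun ((u, v), i) => ((u, i), u, v - i)) ?_ ?_ ?_ ?_ ?_ ?_
      · rintro ⟨⟨_, _⟩, _, _⟩ h; simp [S1] at h ⊢; omega
      · rintro ⟨⟨_, _⟩, _⟩ h; simp [S1] at h ⊢; omega
      · rintro ⟨⟨_, _⟩, _, _⟩ h; simp [S1] at h ⊢; omega
      · rintro ⟨⟨_, _⟩, _⟩ h; simp [S1] at h ⊢; omega
      · rintro ⟨⟨_, _⟩, _, _⟩ h; simp [S1, W1] at h ⊢; rw [← h.2]; ring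
      · rintro ⟨⟨_, _⟩, _, _⟩ h; simp [S1] at h; obtain ⟨_, rfl⟩ := h; simp
  · exact hP.mono fun _ h => h.1
  · exact hP.mono fun _ h => h.1
  · rw [Set.disjoint_left]; rintro p ⟨_, h⟩ ⟨_, h'⟩; omega
  · rintro n; exact (hP.mono (by rintro _ (h | h) <;> exact h.1)) n
  · exact hP.mono fun _ h => h.1
  · rw [Set.disjoint_left]; rintro p (⟨_, h⟩ | ⟨_, h⟩) ⟨_, h'⟩ <;> omega

/-- The product of sums of length one and two, split according to the position of the new `u`
relative to `u₁ > u₂`. -/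
lemma mul12 (f : ℕ → ℕ → ℚ) (g : ℕ → ℕ → ℕ → ℕ → ℚ) :
    Z1 f * Z2 g = Z3 (fun u₁ v₁ u₂ v₂ u₃ v₃ => f u₁ v₁ * g u₂ v₂ u₃ v₃) +
      Z3 (fun u₁ v₁ u₂ v₂ u₃ v₃ => f u₂ v₂ * g u₁ v₁ u₃ v₃) +
      Z3 (fun u₁ v₁ u₂ v₂ u₃ v₃ => f u₃ v₃ * g u₁ v₁ u₂ v₂) +
      Z2 (fun u₁ v₁ u₂ v₂ => ∑ i ∈ Finset.Ico 1 v₁, f u₁ i * g u₁ (v₁ - i) u₂ v₂) +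
      Z2 (fun u₁ v₁ u₂ v₂ => ∑ i ∈ Finset.Ico 1 v₂, f u₂ i * g u₁ v₁ u₂ (v₂ - i)) := by
  have hP : FinFib (S1 ×ˢ S2) (fun p => W1 p.1 + W2 p.2) := by
    have := finFib_cons (B := {p : ℕ × ℕ × ℕ × ℕ × ℕ × ℕ | 0 < p.1 ∧ 0 < p.2.1 ∧ p.2.2 ∈ S2})
      finFib_S2 fun _ h => h
    intro n
    refine ((this n).preimage
      (f := fun p : (ℕ × ℕ) × ℕ × ℕ × ℕ × ℕ => (p.1.1, p.1.2, p.2)) ?_).subset ?_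
    · rintro ⟨⟨_, _⟩, _⟩ _ ⟨⟨_, _⟩, _⟩ _ h
      simpa [Prod.ext_iff, and_assoc] using h
    · rintro ⟨⟨_, _⟩, _⟩ ⟨h, hn⟩
      exact ⟨⟨h.1.1, h.1.2, h.2⟩, hn⟩
  rw [Z1, Z2, gen_mul finFib_S1 finFib_S2]
  have hS : (S1 ×ˢ S2 : Set ((ℕ × ℕ) × ℕ × ℕ × ℕ × ℕ)) =
      ((({p ∈ S1 ×ˢ S2 | p.2.1 < p.1.1} ∪ {p ∈ S1 ×ˢ S2 | p.2.2.2.1 < p.1.1 ∧ p.1.1 < p.2.1}) ∪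
        {p ∈ S1 ×ˢ S2 | p.1.1 < p.2.2.2.1}) ∪ {p ∈ S1 ×ˢ S2 | p.1.1 = p.2.1}) ∪
        {p ∈ S1 ×ˢ S2 | p.1.1 = p.2.2.2.1} := by
    ext p
    simp only [Set.mem_union, Set.mem_ofPred_eq]
    have := lt_trichotomy p.1.1 p.2.1
    have := lt_trichotomy p.1.1 p.2.2.2.1
    tauto
  rw [hS, gen_union, gen_union, gen_union, gen_union]
  · congr 1
    · congr 1
      · congr 1
        · congr 1
          · refine gen_bij (fun ((u₁, v₁), u₂, v₂, u₃, v₃) => (u₁, v₁, u₂, v₂, u₃, v₃))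
              (fun (u₁, v₁, u₂, v₂, u₃, v₃) => ((u₁, v₁), u₂, v₂, u₃, v₃)) ?_ ?_ ?_ ?_ ?_ ?_
            · rintro ⟨⟨_, _⟩, _, _, _, _⟩ h; simp [S1, S2, S3] at h ⊢; omega
            · rintro ⟨_, _, _, _, _, _⟩ h; simp [S1, S2, S3] at h ⊢; omega
            all_goals intros; rfl
          · refine gen_bij (fun ((u₂, v₂), u₁, v₁, u₃, v₃) => (u₁, v₁, u₂, v₂, u₃, v₃))
              (fun (u₁, v₁, u₂, v₂, u₃, v₃) => ((u₂, v₂), u₁, v₁, u₃, v₃)) ?_ ?_ ?_ ?_ ?_ ?_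
            · rintro ⟨⟨_, _⟩, _, _, _, _⟩ h; simp [S1, S2, S3] at h ⊢; omega
            · rintro ⟨_, _, _, _, _, _⟩ h; simp [S1, S2, S3] at h ⊢; omega
            · intros; rfl
            · intros; rfl
            · intros; simp [W1, W2, W3]; ring
            · intros; rfl
        · refine gen_bij (fun ((u₃, v₃), u₁, v₁, u₂, v₂) => (u₁, v₁, u₂, v₂, u₃, v₃))
            (fun (u₁, v₁, u₂, v₂, u₃, v₃) => ((u₃, v₃), u₁, v₁, u₂, v₂)) ?_ ?_ ?_ ?_ ?_ ?_
          · rintro ⟨⟨_, _⟩, _, _, _, _⟩ h; simp [S1, S2, S3] at h ⊢; omega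
          · rintro ⟨_, _, _, _, _, _⟩ h; simp [S1, S2, S3] at h ⊢; omega
          · intros; rfl
          · intros; rfl
          · intros; simp [W1, W2, W3]; ring
          · intros; rfl
      · rw [Z2, ← gen_sigma finFib_S2 (fun p => Finset.Ico 1 p.2.1)
          (fun p i => f p.1 i * g p.1 (p.2.1 - i) p.2.2.1 p.2.2.2)]
        refine gen_bij (fun ((u, i), _, j, u₂, v₂) => ((u, i + j, u₂, v₂), i))
            (fun ((u, v, u₂, v₂), i) => ((u, i), u, v - i, u₂, v₂)) ?_ ?_ ?_ ?_ ?_ ?_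
        · rintro ⟨⟨_, _⟩, _, _, _, _⟩ h; simp [S1, S2] at h ⊢; omega
        · rintro ⟨⟨_, _, _, _⟩, _⟩ h; simp [S1, S2] at h ⊢; omega
        · rintro ⟨⟨_, _⟩, _, _, _, _⟩ h; simp [S1, S2] at h ⊢; omega
        · rintro ⟨⟨_, _, _, _⟩, _⟩ h; simp [S1, S2] at h ⊢; omega
        · rintro ⟨⟨_, _⟩, _, _, _, _⟩ h; simp [S1, S2, W1, W2] at h ⊢; rw [← h.2]; ring
        · rintro ⟨⟨_, _⟩, _, _, _, _⟩ h; simp [S1, S2] at h; obtain ⟨_, rfl⟩ := h; simp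
    · rw [Z2, ← gen_sigma finFib_S2 (fun p => Finset.Ico 1 p.2.2.2)
        (fun p i => f p.2.2.1 i * g p.1 p.2.1 p.2.2.1 (p.2.2.2 - i))]
      refine gen_bij (fun ((u, i), u₁, v₁, _, j) => ((u₁, v₁, u, i + j), i))
          (fun ((u₁, v₁, u, v), i) => ((u, i), u₁, v₁, u, v - i)) ?_ ?_ ?_ ?_ ?_ ?_
      · rintro ⟨⟨_, _⟩, _, _, _, _⟩ h; simp [S1, S2] at h ⊢; omega
      · rintro ⟨⟨_, _, _, _⟩, _⟩ h; simp [S1, S2] at h ⊢; omega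
      · rintro ⟨⟨_, _⟩, _, _, _, _⟩ h; simp [S1, S2] at h ⊢; omega
      · rintro ⟨⟨_, _, _, _⟩, _⟩ h; simp [S1, S2] at h ⊢; omega
      · rintro ⟨⟨_, _⟩, _, _, _, _⟩ h; simp [S1, S2, W1, W2] at h ⊢; rw [← h.2]; ring
      · rintro ⟨⟨_, _⟩, _, _, _, _⟩ h; simp [S1, S2] at h; obtain ⟨_, rfl⟩ := h; simp
  all_goals first
    | exact hP.mono (by intro p h; simp only [Set.mem_union, Set.mem_ofPred_eq] at h; tauto)
    | (rw [Set.disjoint_left]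
       rintro ⟨⟨_, _⟩, _, _, _, _⟩ h h'
       simp [S1, S2] at h h'
       omega)

/-! ### The inner sums of the merged terms are polynomials -/

lemma powerSum_poly (a : ℕ) : ∃ p : Polynomial ℚ, p.natDegree ≤ a + 1 ∧
    ∀ n : ℕ, 0 < n → ∑ i ∈ Finset.Ico 1 n, (i : ℚ) ^ a = p.eval (n : ℚ) := by
  -- Faulhaber's formula, minus the term `i = 0`, which is `1` for `a = 0`
  refine ⟨(∑ i ∈ Finset.range (a + 1),
    Polynomial.C (bernoulli i * ((a + 1).choose i) / (a + 1)) * Polynomial.X ^ (a + 1 - i)) -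
      Polynomial.C (0 ^ a), ?_, ?_⟩
  · refine (Polynomial.natDegree_sub_C).trans_le ?_
    refine Polynomial.natDegree_sum_le_of_forall_le _ _ fun i _ => ?_
    exact (Polynomial.natDegree_C_mul_X_pow_le _ _).trans (by omega)
  · intro n hn
    have h := sum_range_pow n a
    rw [Finset.range_eq_Ico, Finset.sum_eq_sum_Ico_succ_bot hn] at h
    simp only [Polynomial.eval_sub, Polynomial.eval_finsetSum, Polynomial.eval_mul,
      Polynomial.eval_C, Polynomial.eval_pow, Polynomial.eval_X]
    rw [eq_sub_iff_add_eq, add_comm]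
    push_cast at h
    rw [h]
    exact Finset.sum_congr rfl fun i _ => by ring

/-- `∑_{i + j = n} iᵃ jᵇ` over `i, j > 0` is a polynomial in `n` of degree at most `a + b + 1`. The
induction on `b` uses `j = n - i`. -/
lemma convSum_poly (b : ℕ) : ∀ a : ℕ, ∃ p : Polynomial ℚ, p.natDegree ≤ a + b + 1 ∧
    ∀ n : ℕ, 0 < n →
      ∑ i ∈ Finset.Ico 1 n, (i : ℚ) ^ a * ((n - i : ℕ) : ℚ) ^ b = p.eval (n : ℚ) := by
  induction b with
  | zero => simpa using powerSum_poly
  | succ b ih =>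
    intro a
    obtain ⟨p, hp, hp'⟩ := ih a
    obtain ⟨r, hr, hr'⟩ := ih (a + 1)
    refine ⟨Polynomial.X * p - r, ?_, fun n hn => ?_⟩
    · refine (Polynomial.natDegree_sub_le _ _).trans (max_le ?_ (by omega))
      refine Polynomial.natDegree_mul_le.trans ?_
      have := Polynomial.natDegree_X_le (R := ℚ)
      omega
    · rw [Polynomial.eval_sub, Polynomial.eval_mul, Polynomial.eval_X, ← hp' n hn, ← hr' n hn,
        Finset.mul_sum, ← Finset.sum_sub_distrib]
      refine Finset.sum_congr rfl fun i hi => ?_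
      rw [pow_succ _ b, Nat.cast_sub (Finset.mem_Ico.1 hi).2.le]
      ring

/-- `convSum_poly` in terms of coefficients. -/
lemma convSum (a b : ℕ) : ∃ c : ℕ → ℚ, ∀ n : ℕ, 0 < n →
    ∑ i ∈ Finset.Ico 1 n, (i : ℚ) ^ a * ((n - i : ℕ) : ℚ) ^ b =
      ∑ k ∈ Finset.range (a + b + 2), c k * (n : ℚ) ^ k := by
  obtain ⟨p, hp, h⟩ := convSum_poly b a
  exact ⟨p.coeff, fun n hn => by rw [h n hn, Polynomial.eval_eq_sum_range' (n := a + b + 2) (by omega)]⟩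

section span

variable {V : Submodule ℚ (PowerSeries ℚ)}

/-- If the summand `g` is a linear combination of summands whose series lie in `V`, then the series
of `g` lies in `V`. -/
lemma gen_sum_smul_mem {α : Type*} {A : Set α} {w : α → ℕ} (hA : FinFib A w) (s : Finset ℕ)
    (c : ℕ → ℚ) (f : ℕ → α → ℚ) (h : ∀ k ∈ s, gen A w (f k) ∈ V) {g : α → ℚ}
    (hg : ∀ p ∈ A, g p = ∑ k ∈ s, c k * f k p) : gen A w g ∈ V := by
  rw [gen_congr hg, gen_sum hA s (fun k p => c k * f k p)]
  refine Submodule.sum_mem _ fun k hk => ?_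
  rw [gen_smul]
  exact V.smul_mem _ (h k hk)

/-- The merged term of a product of two sums of length one lies in `V` when all the monomial sums
of degree at most `a + b + 1` in `v` do. -/
lemma Z1_merge (a b : ℕ) (h : ℕ → ℚ)
    (H : ∀ k ≤ a + b + 1, Z1 (fun u v => h u * (v : ℚ) ^ k) ∈ V) :
    Z1 (fun u v => ∑ i ∈ Finset.Ico 1 v, (i : ℚ) ^ a * (h u * ((v - i : ℕ) : ℚ) ^ b)) ∈ V := by
  obtain ⟨c, hc⟩ := convSum a b
  refine gen_sum_smul_mem finFib_S1 (Finset.range (a + b + 2)) c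
    (fun k p => h p.1 * (p.2 : ℚ) ^ k) (fun k hk => H k (by simp at hk; omega)) ?_
  rintro ⟨u, v⟩ hp
  have := congrArg (h u * ·) (hc v hp.2)
  simp only [Finset.mul_sum] at this
  simpa only [mul_left_comm] using this

/-- The merged term at `u₁` of a product of sums of length one and two. -/
lemma Z2_merge_left (a b c : ℕ)
    (H : ∀ k ≤ a + b + 1, Z2 (fun _ v₁ _ v₂ => (v₁ : ℚ) ^ k * (v₂ : ℚ) ^ c) ∈ V) :
    Z2 (fun _ v₁ _ v₂ => ∑ i ∈ Finset.Ico 1 v₁,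
      (i : ℚ) ^ a * (((v₁ - i : ℕ) : ℚ) ^ b * (v₂ : ℚ) ^ c)) ∈ V := by
  obtain ⟨d, hd⟩ := convSum a b
  refine gen_sum_smul_mem finFib_S2 (Finset.range (a + b + 2)) d
    (fun k p => (p.2.1 : ℚ) ^ k * (p.2.2.2 : ℚ) ^ c) (fun k hk => H k (by simp at hk; omega)) ?_
  rintro ⟨u₁, v₁, u₂, v₂⟩ hp
  have := congrArg (· * (v₂ : ℚ) ^ c) (hd v₁ hp.1)
  simp only [Finset.sum_mul] at this
  simpa only [mul_assoc] using this

/-- The merged term at `u₂` of a product of sums of length one and two. -/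
lemma Z2_merge_right (a b c : ℕ)
    (H : ∀ k ≤ a + c + 1, Z2 (fun _ v₁ _ v₂ => (v₁ : ℚ) ^ b * (v₂ : ℚ) ^ k) ∈ V) :
    Z2 (fun _ v₁ _ v₂ => ∑ i ∈ Finset.Ico 1 v₂,
      (i : ℚ) ^ a * ((v₁ : ℚ) ^ b * ((v₂ - i : ℕ) : ℚ) ^ c)) ∈ V := by
  obtain ⟨d, hd⟩ := convSum a c
  refine gen_sum_smul_mem finFib_S2 (Finset.range (a + c + 2)) d
    (fun k p => (p.2.1 : ℚ) ^ b * (p.2.2.2 : ℚ) ^ k) (fun k hk => H k (by simp at hk; omega)) ?_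
  rintro ⟨u₁, v₁, u₂, v₂⟩ hp
  have := congrArg ((v₁ : ℚ) ^ b * ·) (hd v₂ hp.2.2.2)
  simp only [Finset.mul_sum] at this
  simpa only [mul_left_comm] using this

end span

/-! ### Products of brackets and the two bi-brackets -/

/-- The brackets of length one or two and weight at most `W`, up to nonzero factors: `[a + 1]` is
`Z1 (vᵃ)` divided by `a!`, and similarly for length two. -/
def gens2 (W : ℕ) : Set (PowerSeries ℚ) :=
  {f | ∃ a, a + 1 ≤ W ∧ f = Z1 fun _ v => (v : ℚ) ^ a} ∪
  {f | ∃ a b, a + b + 2 ≤ W ∧ f = Z2 fun _ v₁ _ v₂ => (v₁ : ℚ) ^ a * (v₂ : ℚ) ^ b}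

/-- The brackets of length one to three and weight at most `W`, up to nonzero factors. -/
def gens3 (W : ℕ) : Set (PowerSeries ℚ) :=
  gens2 W ∪ {f | ∃ a b c, a + b + c + 3 ≤ W ∧
    f = Z3 fun _ v₁ _ v₂ _ v₃ => (v₁ : ℚ) ^ a * ((v₂ : ℚ) ^ b * (v₃ : ℚ) ^ c)}

lemma Z1_mem {a W : ℕ} (h : a + 1 ≤ W) :
    Z1 (fun _ v => (v : ℚ) ^ a) ∈ Submodule.span ℚ (gens2 W) :=
  Submodule.subset_span (Or.inl ⟨a, h, rfl⟩)

lemma Z2_mem {a b W : ℕ} (h : a + b + 2 ≤ W) :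
    Z2 (fun _ v₁ _ v₂ => (v₁ : ℚ) ^ a * (v₂ : ℚ) ^ b) ∈ Submodule.span ℚ (gens2 W) :=
  Submodule.subset_span (Or.inr ⟨a, b, h, rfl⟩)

lemma Z3_mem {a b c W : ℕ} (h : a + b + c + 3 ≤ W) :
    Z3 (fun _ v₁ _ v₂ _ v₃ => (v₁ : ℚ) ^ a * ((v₂ : ℚ) ^ b * (v₃ : ℚ) ^ c)) ∈
      Submodule.span ℚ (gens3 W) :=
  Submodule.subset_span (Or.inr ⟨a, b, c, h, rfl⟩)

lemma span2_le_span3 {W W' : ℕ} (h : W ≤ W') :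
    Submodule.span ℚ (gens2 W) ≤ Submodule.span ℚ (gens3 W') := by
  refine Submodule.span_mono ?_
  rintro f (⟨a, ha, rfl⟩ | ⟨a, b, ha, rfl⟩)
  · exact Or.inl (Or.inl ⟨a, by omega, rfl⟩)
  · exact Or.inl (Or.inr ⟨a, b, by omega, rfl⟩)

lemma stuffle11 (a b : ℕ) :
    Z1 (fun _ v => (v : ℚ) ^ a) * Z1 (fun _ v => (v : ℚ) ^ b) ∈
      Submodule.span ℚ (gens2 (a + b + 2)) := by
  rw [mul11]
  refine add_mem (add_mem (Z2_mem (by omega)) ?_) ?_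
  · simp only [mul_comm ((_ : ℚ) ^ a)]
    exact Z2_mem (by omega)
  · have := Z1_merge (V := Submodule.span ℚ (gens2 (a + b + 2))) a b (fun _ => 1) fun k hk => by
      simp only [one_mul]
      exact Z1_mem (by omega)
    simpa only [one_mul] using this

lemma stuffle12 (a b c : ℕ) :
    Z1 (fun _ v => (v : ℚ) ^ a) * Z2 (fun _ v₁ _ v₂ => (v₁ : ℚ) ^ b * (v₂ : ℚ) ^ c) ∈
      Submodule.span ℚ (gens3 (a + b + c + 3)) := by
  rw [mul12]
  refine add_mem (add_mem (add_mem (add_mem (Z3_mem (by omega)) ?_) ?_) ?_) ?_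
  · simp only [mul_left_comm ((_ : ℚ) ^ a)]
    exact Z3_mem (by omega)
  · simp only [mul_comm ((_ : ℚ) ^ a), mul_assoc]
    exact Z3_mem (by omega)
  · exact Z2_merge_left a b c fun k hk => span2_le_span3 le_rfl (Z2_mem (by omega))
  · exact Z2_merge_right a b c fun k hk => span2_le_span3 le_rfl (Z2_mem (by omega))

lemma add_pow_Z2_mem (a : ℕ) :
    Z2 (fun _ v₁ _ v₂ => ((v₁ : ℚ) + v₂) ^ a) ∈ Submodule.span ℚ (gens2 (a + 2)) := by
  refine gen_sum_smul_mem finFib_S2 (Finset.range (a + 1)) (fun k => (a.choose k : ℚ))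
    (fun k p => (p.2.1 : ℚ) ^ k * (p.2.2.2 : ℚ) ^ (a - k)) (fun k hk => ?_) ?_
  · simp at hk
    exact Z2_mem (by omega)
  · intro p _
    simp only [add_pow]
    exact Finset.sum_congr rfl fun _ _ => by ring

/-- The bi-bracket `[a + 1; 1]` is a combination of brackets of length at most two: both the stuffle
expansion of `[1] · [a + 1]` and its expansion after conjugation consist of such brackets, except for
the merged term of the latter, where the `v - 1` ways of splitting `v` become a factor `u - 1`. -/
lemma Z1_u_mem (a : ℕ) :
    Z1 (fun u v => (u : ℚ) * (v : ℚ) ^ a) ∈ Submodule.span ℚ (gens2 (a + 2)) := by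
  have hP := stuffle11 0 a
  rw [← conj1 (fun _ v => (v : ℚ) ^ a), ← conj1 (fun _ v => (v : ℚ) ^ 0), mul11] at hP
  simp only [pow_zero, one_mul, zero_add] at hP
  have h1 : Z2 (fun _ _ u₂ _ => (u₂ : ℚ) ^ a) = Z2 (fun _ v₁ _ v₂ => (v₁ : ℚ) ^ a * (v₂ : ℚ) ^ 0) := by
    simp only [pow_zero, mul_one]
    exact conj2 (fun _ v₁ _ _ => (v₁ : ℚ) ^ a)
  have h2 : Z2 (fun u₁ _ _ _ => (u₁ : ℚ) ^ a) = Z2 (fun _ v₁ _ v₂ => ((v₁ : ℚ) + v₂) ^ a) := by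
    rw [← conj2 (fun _ v₁ _ v₂ => ((v₁ : ℚ) + v₂) ^ a)]
    refine gen_congr fun p hp => ?_
    simp only
    rw [Nat.cast_sub hp.2.1.le, add_sub_cancel]
  have h3 : Z1 (fun u v => ∑ i ∈ Finset.Ico 1 v, (u : ℚ) ^ a) =
      Z1 (fun u v => ((u : ℚ) - 1) * (v : ℚ) ^ a) := by
    rw [← conj1 (fun u v => ((u : ℚ) - 1) * (v : ℚ) ^ a)]
    refine gen_congr fun p hp => ?_
    simp [Nat.cast_sub (show 1 ≤ p.2 from hp.2)]
  have h4 : Z1 (fun u v => (u : ℚ) * (v : ℚ) ^ a) =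
      Z1 (fun u v => ((u : ℚ) - 1) * (v : ℚ) ^ a) + Z1 (fun _ v => (v : ℚ) ^ a) := by
    rw [Z1, Z1, Z1, ← gen_add finFib_S1]
    exact gen_congr fun p _ => by ring
  rw [h1, h2, h3] at hP
  rw [h4]
  refine add_mem ?_ (Z1_mem (by omega))
  exact ((Submodule.add_mem_iff_right _ (add_mem (Z2_mem (by omega)) (add_pow_Z2_mem a))).1 hP)

/-- The case `[a + 1, b + 1; 1, 0]`. In the conjugated expansion of `[1] · [a + 1, b + 1]` the two
merged terms carry the factors `v₁ - 1` and `v₂ - 1`, which conjugate to `u₂ - 1` and `u₁ - u₂ - 1`;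
their sum is `u₁ - 2`. -/
lemma Z2_u₁_mem (a b : ℕ) :
    Z2 (fun u₁ v₁ _ v₂ => (u₁ : ℚ) * ((v₁ : ℚ) ^ a * (v₂ : ℚ) ^ b)) ∈
      Submodule.span ℚ (gens3 (a + b + 3)) := by
  have hP := stuffle12 0 a b
  rw [← conj2 (fun _ v₁ _ v₂ => (v₁ : ℚ) ^ a * (v₂ : ℚ) ^ b),
    ← conj1 (fun _ v => (v : ℚ) ^ 0), mul12] at hP
  simp only [pow_zero, one_mul, zero_add] at hP
  have h1 : Z3 (fun _ _ u₂ _ u₃ _ => (u₃ : ℚ) ^ a * ((u₂ - u₃ : ℕ) : ℚ) ^ b) ∈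
      Submodule.span ℚ (gens3 (a + b + 3)) := by
    rw [conj3 (fun _ v₁ _ v₂ _ _ => (v₁ : ℚ) ^ a * (v₂ : ℚ) ^ b)]
    have := Z3_mem (a := a) (b := b) (c := 0) (W := a + b + 3) (by omega)
    simpa only [pow_zero, mul_one] using this
  have h2 : Z3 (fun u₁ _ _ _ u₃ _ => (u₃ : ℚ) ^ a * ((u₁ - u₃ : ℕ) : ℚ) ^ b) ∈
      Submodule.span ℚ (gens3 (a + b + 3)) := by
    have h : Z3 (fun u₁ _ _ _ u₃ _ => (u₃ : ℚ) ^ a * ((u₁ - u₃ : ℕ) : ℚ) ^ b) =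
        Z3 (fun _ v₁ _ v₂ _ v₃ => (v₁ : ℚ) ^ a * ((v₂ : ℚ) + v₃) ^ b) := by
      rw [← conj3 (fun _ v₁ _ v₂ _ v₃ => (v₁ : ℚ) ^ a * ((v₂ : ℚ) + v₃) ^ b)]
      refine gen_congr fun p hp => ?_
      simp only
      rw [Nat.cast_sub hp.2.1.le, Nat.cast_sub hp.2.2.2.1.le,
        Nat.cast_sub (hp.2.2.2.1.le.trans hp.2.1.le)]
      ring
    rw [h]
    refine gen_sum_smul_mem finFib_S3 (Finset.range (b + 1)) (fun k => (b.choose k : ℚ))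
      (fun k p => (p.2.1 : ℚ) ^ a * ((p.2.2.2.1 : ℚ) ^ k * (p.2.2.2.2.2 : ℚ) ^ (b - k)))
      (fun k hk => ?_) ?_
    · simp at hk
      exact Z3_mem (by omega)
    · intro p _
      simp only [add_pow, Finset.mul_sum]
      exact Finset.sum_congr rfl fun _ _ => by ring
  have h3 : Z3 (fun u₁ _ u₂ _ _ _ => (u₂ : ℚ) ^ a * ((u₁ - u₂ : ℕ) : ℚ) ^ b) ∈
      Submodule.span ℚ (gens3 (a + b + 3)) := by
    have h : Z3 (fun u₁ _ u₂ _ _ _ => (u₂ : ℚ) ^ a * ((u₁ - u₂ : ℕ) : ℚ) ^ b) =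
        Z3 (fun _ v₁ _ v₂ _ v₃ => ((v₁ : ℚ) + v₂) ^ a * (v₃ : ℚ) ^ b) := by
      rw [← conj3 (fun _ v₁ _ v₂ _ v₃ => ((v₁ : ℚ) + v₂) ^ a * (v₃ : ℚ) ^ b)]
      refine gen_congr fun p hp => ?_
      simp only
      rw [Nat.cast_sub hp.2.2.2.1.le]
      ring
    rw [h]
    refine gen_sum_smul_mem finFib_S3 (Finset.range (a + 1)) (fun k => (a.choose k : ℚ))
      (fun k p => (p.2.1 : ℚ) ^ k * ((p.2.2.2.1 : ℚ) ^ (a - k) * (p.2.2.2.2.2 : ℚ) ^ b))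
      (fun k hk => ?_) ?_
    · simp at hk
      exact Z3_mem (by omega)
    · intro p _
      simp only [add_pow, Finset.sum_mul]
      exact Finset.sum_congr rfl fun _ _ => by ring
  have h4 : Z2 (fun u₁ v₁ u₂ _ => ∑ i ∈ Finset.Ico 1 v₁,
        (u₂ : ℚ) ^ a * ((u₁ - u₂ : ℕ) : ℚ) ^ b) =
      Z2 (fun _ v₁ u₂ v₂ => ((u₂ : ℚ) - 1) * ((v₁ : ℚ) ^ a * (v₂ : ℚ) ^ b)) := by
    rw [← conj2 (fun _ v₁ u₂ v₂ => ((u₂ : ℚ) - 1) * ((v₁ : ℚ) ^ a * (v₂ : ℚ) ^ b))]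
    refine gen_congr fun p hp => ?_
    simp [Nat.cast_sub (show 1 ≤ p.2.1 from hp.1)]
  have h5 : Z2 (fun u₁ _ u₂ v₂ => ∑ i ∈ Finset.Ico 1 v₂,
        (u₂ : ℚ) ^ a * ((u₁ - u₂ : ℕ) : ℚ) ^ b) =
      Z2 (fun u₁ v₁ u₂ v₂ => ((u₁ : ℚ) - u₂ - 1) * ((v₁ : ℚ) ^ a * (v₂ : ℚ) ^ b)) := by
    rw [← conj2 (fun u₁ v₁ u₂ v₂ => ((u₁ : ℚ) - u₂ - 1) * ((v₁ : ℚ) ^ a * (v₂ : ℚ) ^ b))]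
    refine gen_congr fun p hp => ?_
    simp [Nat.cast_sub (show 1 ≤ p.2.2.2 from hp.2.2.2)]
  have h6 : Z2 (fun u₁ v₁ _ v₂ => (u₁ : ℚ) * ((v₁ : ℚ) ^ a * (v₂ : ℚ) ^ b)) =
      (Z2 (fun _ v₁ u₂ v₂ => ((u₂ : ℚ) - 1) * ((v₁ : ℚ) ^ a * (v₂ : ℚ) ^ b)) +
      Z2 (fun u₁ v₁ u₂ v₂ => ((u₁ : ℚ) - u₂ - 1) * ((v₁ : ℚ) ^ a * (v₂ : ℚ) ^ b))) +
      (2 : ℚ) • Z2 (fun _ v₁ _ v₂ => (v₁ : ℚ) ^ a * (v₂ : ℚ) ^ b) := by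
    rw [Z2, Z2, Z2, Z2, ← gen_add finFib_S2, ← gen_smul, ← gen_add finFib_S2]
    exact gen_congr fun p _ => by ring
  rw [h4, h5, add_assoc (_ : PowerSeries ℚ)] at hP
  rw [h6]
  refine add_mem ?_ (Submodule.smul_mem _ _ (span2_le_span3 le_rfl (Z2_mem (by omega))))
  exact (Submodule.add_mem_iff_right _ (add_mem (add_mem h1 h2) h3)).1 hP

lemma Z1_mul_span2 (a W : ℕ) {f : PowerSeries ℚ} (hf : f ∈ Submodule.span ℚ (gens2 W)) :
    Z1 (fun _ v => (v : ℚ) ^ a) * f ∈ Submodule.span ℚ (gens3 (a + 1 + W)) := by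
  induction hf using Submodule.span_induction with
  | mem f hf =>
    have hmono : ∀ W', W' ≤ a + 1 + W →
        Submodule.span ℚ (gens3 W') ≤ Submodule.span ℚ (gens3 (a + 1 + W)) := by
      refine fun W' h => Submodule.span_mono ?_
      rintro _ ((⟨b, hb, rfl⟩ | ⟨b, c, hb, rfl⟩) | ⟨b, c, d, hb, rfl⟩)
      · exact Or.inl (Or.inl ⟨b, by omega, rfl⟩)
      · exact Or.inl (Or.inr ⟨b, c, by omega, rfl⟩)
      · exact Or.inr ⟨b, c, d, by omega, rfl⟩
    obtain ⟨b, hb, rfl⟩ | ⟨b, c, hb, rfl⟩ := hf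
    · exact span2_le_span3 (by omega) (stuffle11 a b)
    · exact hmono _ (by omega) (stuffle12 a b c)
  | zero => simp
  | add f g _ _ hf hg => rw [mul_add]; exact add_mem hf hg
  | smul c f _ hf => rw [mul_smul_comm]; exact Submodule.smul_mem _ _ hf

/-- The case `[a + 1, b + 1; 0, 1]`. It occurs in the stuffle product `[a + 1] · [b + 1; 1]` together
with `[b + 1, a + 1; 1, 0]` and length-one bi-brackets `[k + 1; 1]`. -/
lemma Z2_u₂_mem (a b : ℕ) :
    Z2 (fun _ v₁ u₂ v₂ => (u₂ : ℚ) * ((v₁ : ℚ) ^ a * (v₂ : ℚ) ^ b)) ∈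
      Submodule.span ℚ (gens3 (a + b + 3)) := by
  have hP := Z1_mul_span2 a _ (Z1_u_mem b)
  rw [mul11, show a + 1 + (b + 2) = a + b + 3 by omega] at hP
  have h1 : Z2 (fun u₁ v₁ _ v₂ => (v₂ : ℚ) ^ a * ((u₁ : ℚ) * (v₁ : ℚ) ^ b)) ∈
      Submodule.span ℚ (gens3 (a + b + 3)) := by
    have := Z2_u₁_mem b a
    rw [add_comm b a] at this
    convert this using 6
    ring
  have h2 := Z1_merge (V := Submodule.span ℚ (gens3 (a + b + 3))) a b (fun u => (u : ℚ))
    fun k hk => span2_le_span3 (by omega) (Z1_u_mem k)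
  have h3 : Z2 (fun _ v₁ u₂ v₂ => (u₂ : ℚ) * ((v₁ : ℚ) ^ a * (v₂ : ℚ) ^ b)) =
      Z2 (fun _ v₁ u₂ v₂ => (v₁ : ℚ) ^ a * ((u₂ : ℚ) * (v₂ : ℚ) ^ b)) :=
    gen_congr fun p _ => by ring
  rw [h3]
  exact (Submodule.add_mem_iff_left _ h1).1 ((Submodule.add_mem_iff_left _ h2).1 hP)

/-! ### Comparison with brackets and bi-brackets -/

/-- The index set of all terms of a bi-bracket, as pairs `(u, v)` with no upper bounds imposed. -/
def idx (l : ℕ) : Set ((Fin l → ℕ) × (Fin l → ℕ)) :=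
  {p | (∀ i j : Fin l, i < j → p.1 j < p.1 i) ∧ (∀ j, 0 < p.1 j) ∧ ∀ j, 0 < p.2 j}

lemma biBracket_eq_gen {l : ℕ} (s r : Fin l → ℕ) :
    biBracket s r = gen (idx l) (fun p => ∑ j, p.1 j * p.2 j) fun p =>
      ∏ j, (p.1 j : ℚ) ^ (r j) / (Nat.factorial (r j)) *
            ((p.2 j : ℚ) ^ (s j - 1) / (Nat.factorial (s j - 1))) := by
  classical
  ext n
  simp only [biBracket, gen, PowerSeries.coeff_mk]
  rw [← Fintype.sum_prod_type', ← Finset.sum_filter, ← finsum_mem_coe_finset]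
  refine finsum_mem_eq_of_bijOn (fun p => (fun j => (p.1 j : ℕ), fun j => (p.2 j : ℕ)))
    ⟨?_, ?_, ?_⟩ fun _ _ => rfl
  · rintro ⟨u, v⟩ h
    simp at h
    exact ⟨⟨h.1, h.2.1, h.2.2.1⟩, h.2.2.2⟩
  · rintro ⟨u, v⟩ _ ⟨u', v'⟩ _ h
    simp only [Prod.mk.injEq, funext_iff] at h
    ext j
    · exact h.1 j
    · exact h.2 j
  · rintro ⟨u, v⟩ ⟨⟨h1, h2, h3⟩, h4⟩
    simp only [Set.mem_preimage, Set.mem_singleton_iff] at h1 h2 h3 h4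
    have hle : ∀ j, u j * v j ≤ n := fun j => by
      rw [← h4]
      exact Finset.single_le_sum (f := fun j => u j * v j) (fun _ _ => Nat.zero_le _)
        (Finset.mem_univ j)
    have hu : ∀ j, u j < n + 1 := fun j => by
      have := hle j; have := h3 j; nlinarith
    have hv : ∀ j, v j < n + 1 := fun j => by
      have := hle j; have := h2 j; nlinarith
    exact ⟨(fun j => ⟨u j, hu j⟩, fun j => ⟨v j, hv j⟩),
      by simp only [Finset.coe_filter, Finset.mem_univ, true_and]; exact ⟨h1, h2, h3, h4⟩, rfl⟩

lemma biBracket_one (s r : Fin 1 → ℕ) : biBracket s r = Z1 fun u v =>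
    (u : ℚ) ^ r 0 / (r 0).factorial * ((v : ℚ) ^ (s 0 - 1) / (s 0 - 1).factorial) := by
  rw [biBracket_eq_gen]
  refine gen_bij (fun p => (p.1 0, p.2 0)) (fun p => (![p.1], ![p.2])) ?_ ?_ ?_ ?_ ?_ ?_
  · rintro ⟨u, v⟩ ⟨_, h2, h3⟩
    exact ⟨h2 0, h3 0⟩
  · rintro ⟨u, v⟩ h
    simpa [idx, S1] using h
  · rintro ⟨u, v⟩ _
    ext j <;> fin_cases j <;> rfl
  · intro _ _; rfl
  · intro p _; simp [W1]
  · intro p _; simp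

lemma biBracket_two (s r : Fin 2 → ℕ) : biBracket s r = Z2 fun u₁ v₁ u₂ v₂ =>
    ((u₁ : ℚ) ^ r 0 / (r 0).factorial * ((v₁ : ℚ) ^ (s 0 - 1) / (s 0 - 1).factorial)) *
    ((u₂ : ℚ) ^ r 1 / (r 1).factorial * ((v₂ : ℚ) ^ (s 1 - 1) / (s 1 - 1).factorial)) := by
  rw [biBracket_eq_gen]
  refine gen_bij (fun p => (p.1 0, p.2 0, p.1 1, p.2 1))
    (fun p => (![p.1, p.2.2.1], ![p.2.1, p.2.2.2])) ?_ ?_ ?_ ?_ ?_ ?_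
  · rintro ⟨u, v⟩ ⟨h1, h2, h3⟩
    exact ⟨h3 0, h1 0 1 (by decide), h2 1, h3 1⟩
  · rintro ⟨u₁, v₁, u₂, v₂⟩ h
    simp [idx, S1, S2, Fin.forall_fin_two] at h ⊢
    omega
  · rintro ⟨u, v⟩ _
    ext j <;> fin_cases j <;> rfl
  · intro _ _; rfl
  · intro p _; simp [W2, W1, Fin.sum_univ_two]
  · intro p _; simp [Fin.prod_univ_two]

lemma biBracket_three (s r : Fin 3 → ℕ) : biBracket s r = Z3 fun u₁ v₁ u₂ v₂ u₃ v₃ =>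
    ((u₁ : ℚ) ^ r 0 / (r 0).factorial * ((v₁ : ℚ) ^ (s 0 - 1) / (s 0 - 1).factorial)) *
    ((u₂ : ℚ) ^ r 1 / (r 1).factorial * ((v₂ : ℚ) ^ (s 1 - 1) / (s 1 - 1).factorial)) *
    ((u₃ : ℚ) ^ r 2 / (r 2).factorial * ((v₃ : ℚ) ^ (s 2 - 1) / (s 2 - 1).factorial)) := by
  rw [biBracket_eq_gen]
  refine gen_bij (fun p => (p.1 0, p.2 0, p.1 1, p.2 1, p.1 2, p.2 2))
    (fun p => (![p.1, p.2.2.1, p.2.2.2.2.1], ![p.2.1, p.2.2.2.1, p.2.2.2.2.2])) ?_ ?_ ?_ ?_ ?_ ?_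
  · rintro ⟨u, v⟩ ⟨h1, h2, h3⟩
    exact ⟨h3 0, h1 0 1 (by decide), h3 1, h1 1 2 (by decide), h2 2, h3 2⟩
  · rintro ⟨u₁, v₁, u₂, v₂, u₃, v₃⟩ h
    simp [idx, S1, S2, S3, Fin.forall_fin_succ] at h ⊢
    omega
  · rintro ⟨u, v⟩ _
    ext j <;> fin_cases j <;> rfl
  · intro _ _; rfl
  · intro p _; simp [W3, W2, W1, Fin.sum_univ_three, add_assoc]
  · intro p _; simp [Fin.prod_univ_three]

lemma gens3_span_le (W : ℕ) : Submodule.span ℚ (gens3 W) ≤ Submodule.span ℚ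
      (({1} ∪ {f | ∃ (r : ℕ) (a : Fin r → ℕ), (∀ j, 1 ≤ a j) ∧ r ≤ 3 ∧
        (∑ j, a j) ≤ W ∧ f = bracket a}) : Set (PowerSeries ℚ)) := by
  rw [Submodule.span_le]
  rintro f ((⟨a, h, rfl⟩ | ⟨a, b, h, rfl⟩) | ⟨a, b, c, h, rfl⟩)
  · have : Z1 (fun _ v => (v : ℚ) ^ a) = (a.factorial : ℚ) • bracket ![a + 1] := by
      rw [bracket, biBracket_one, Z1, Z1, ← gen_smul]
      refine gen_congr fun p _ => ?_
      have := Nat.factorial_ne_zero a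
      simp
      field_simp
    rw [this]
    refine Submodule.smul_mem _ _ (Submodule.subset_span (Or.inr ⟨1, _, ?_, by omega, ?_, rfl⟩))
    · simp
    · simpa using h
  · have : Z2 (fun _ v₁ _ v₂ => (v₁ : ℚ) ^ a * (v₂ : ℚ) ^ b) =
        (a.factorial * b.factorial : ℚ) • bracket ![a + 1, b + 1] := by
      rw [bracket, biBracket_two, Z2, Z2, ← gen_smul]
      refine gen_congr fun p _ => ?_
      have := Nat.factorial_ne_zero a
      have := Nat.factorial_ne_zero b
      simp
      field_simp
    rw [this]
    refine Submodule.smul_mem _ _ (Submodule.subset_span (Or.inr ⟨2, _, ?_, by omega, ?_, rfl⟩))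
    · simp [Fin.forall_fin_two]
    · simp [Fin.sum_univ_two]; omega
  · have : Z3 (fun _ v₁ _ v₂ _ v₃ => (v₁ : ℚ) ^ a * ((v₂ : ℚ) ^ b * (v₃ : ℚ) ^ c)) =
        (a.factorial * b.factorial * c.factorial : ℚ) • bracket ![a + 1, b + 1, c + 1] := by
      rw [bracket, biBracket_three, Z3, Z3, ← gen_smul]
      refine gen_congr fun p _ => ?_
      have := Nat.factorial_ne_zero a
      have := Nat.factorial_ne_zero b
      have := Nat.factorial_ne_zero c
      simp
      field_simp
    rw [this]
    refine Submodule.smul_mem _ _ (Submodule.subset_span (Or.inr ⟨3, _, ?_, by omega, ?_, rfl⟩))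
    · simp [Fin.forall_fin_succ]
    · simp [Fin.sum_univ_three]; omega

/-- For all `s₁, s₂ ≥ 1` the bi-brackets `[s₁,s₂; 1,0]` and `[s₁,s₂; 0,1]` lie in the ℚ-linear
span of `1` and the brackets of length `≤ 3` and weight `≤ s₁+s₂+1`. -/
theorem biBracket_two_one_mem_span (s1 s2 : ℕ) (h1 : 1 ≤ s1) (h2 : 1 ≤ s2) :
    biBracket ![s1, s2] ![1, 0] ∈ Submodule.span ℚ
      (({1} ∪ {f | ∃ (r : ℕ) (a : Fin r → ℕ), (∀ j, 1 ≤ a j) ∧ r ≤ 3 ∧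
        (∑ j, a j) ≤ s1 + s2 + 1 ∧ f = bracket a}) : Set (PowerSeries ℚ)) ∧
    biBracket ![s1, s2] ![0, 1] ∈ Submodule.span ℚ
      (({1} ∪ {f | ∃ (r : ℕ) (a : Fin r → ℕ), (∀ j, 1 ≤ a j) ∧ r ≤ 3 ∧
        (∑ j, a j) ≤ s1 + s2 + 1 ∧ f = bracket a}) : Set (PowerSeries ℚ)) := by
  obtain ⟨a, rfl⟩ := Nat.exists_eq_add_of_le' h1
  obtain ⟨b, rfl⟩ := Nat.exists_eq_add_of_le' h2
  have hW : a + 1 + (b + 1) + 1 = a + b + 3 := by omega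
  rw [hW]
  have ha := Nat.factorial_ne_zero a
  have hb := Nat.factorial_ne_zero b
  constructor <;> refine gens3_span_le _ ?_
  · have : biBracket ![a + 1, b + 1] ![1, 0] = (a.factorial * b.factorial : ℚ)⁻¹ •
        Z2 (fun u₁ v₁ _ v₂ => (u₁ : ℚ) * ((v₁ : ℚ) ^ a * (v₂ : ℚ) ^ b)) := by
      rw [biBracket_two, Z2, Z2, ← gen_smul]
      refine gen_congr fun p _ => ?_
      simp
      field_simp
    rw [this]
    exact Submodule.smul_mem _ _ (Z2_u₁_mem a b)
  · have : biBracket ![a + 1, b + 1] ![0, 1] = (a.factorial * b.factorial : ℚ)⁻¹ •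
        Z2 (fun _ v₁ u₂ v₂ => (u₂ : ℚ) * ((v₁ : ℚ) ^ a * (v₂ : ℚ) ^ b)) := by
      rw [biBracket_two, Z2, Z2, ← gen_smul]
      refine gen_congr fun p _ => ?_
      simp
      field_simp
    rw [this]
    exact Submodule.smul_mem _ _ (Z2_u₂_mem a b)
end

section
/- One has the relation between double zeta values and ζ(12): (5197/691)·ζ(12) = 168·ζ(5,7) + 150·ζ(7,5) + 28·ζ(9,3). -/
/-!
The relation follows from the double shuffle relations in weight 12 together with Euler's
evaluation of even zeta values. Each product `ζ(a) ζ(b)` with `a + b = 12` is expanded in two ways: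

* the stuffle product gives `ζ(a, b) + ζ(b, a) + ζ(12)` (`stuffle`);
* the shuffle product, which comes from the partial fraction expansion of `1 / (m^a n^b)` in powers
  of `m + n`, gives `∑_r (C(r-1, a-1) + C(r-1, b-1)) ζ(r, 12 - r)` (`shuffle`).

Write `D(a, b)` for the relation "shuffle minus stuffle". The claim is the combination
`42 D(4, 8) - 90 D(5, 7) + 55 D(6, 6)`, to which is added `15` times the identity expressing the
stuffle expansion of `ζ(6)²` through `ζ(6)² = (715 / 691) ζ(12)`. Only pairs with `a, b ≥ 4` occur,
so every double zeta value involved has first argument at least `4` and converges by comparison with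
`ζ(2)²`; no regularization is needed. The prime `691` enters through the Bernoulli number `B₁₂`.
-/

open Finset

/-- The multiple zeta value `ζ(s₁,…,s_l) = ∑_{n₁>⋯>n_l>0} 1/(n₁^{s₁}⋯n_l^{s_l})` as a real
number (a `tsum` over strictly decreasing tuples of positive integers). -/
noncomputable def mzv {l : ℕ} (s : Fin l → ℕ) : ℝ :=
  ∑' n : {n : Fin l → ℕ // (∀ i j : Fin l, i < j → n j < n i) ∧ ∀ j, 0 < n j},
    ∏ j, (1 : ℝ) / (n.1 j : ℝ) ^ (s j)

/-- The Riemann zeta value `ζ(a) = ∑_{n ≥ 1} n^{-a}`, indexed by `n - 1 ∈ ℕ`. -/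
noncomputable def zetaOne (a : ℕ) : ℝ := ∑' n : ℕ, ((n : ℝ) + 1)⁻¹ ^ a

/-- The double zeta value `ζ(r, s) = ∑_{m, n ≥ 1} (m + n)^{-r} n^{-s}`, indexed by
`(m - 1, n - 1) ∈ ℕ × ℕ`. -/
noncomputable def zetaTwo (r s : ℕ) : ℝ :=
  ∑' p : ℕ × ℕ, ((p.1 : ℝ) + p.2 + 2)⁻¹ ^ r * ((p.2 : ℝ) + 1)⁻¹ ^ s

lemma mzv_one_eq (a : ℕ) : mzv ![a] = zetaOne a := by
  unfold mzv zetaOne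
  let e : ℕ ≃ {n : Fin 1 → ℕ // (∀ i j : Fin 1, i < j → n j < n i) ∧ ∀ j, 0 < n j} :=
    { toFun := fun n => ⟨![n + 1], by
        refine ⟨fun i j h => absurd h (by simp [Subsingleton.elim i j]), fun j => by simp⟩⟩
      invFun := fun n => n.1 0 - 1
      left_inv := fun n => by simp
      right_inv := fun n => by
        have := n.2.2 0
        ext j
        fin_cases j
        simp
        omega }
  rw [← e.tsum_eq]
  simp [e]

lemma mzv_two_eq (r s : ℕ) : mzv ![r, s] = zetaTwo r s := by
  unfold mzv zetaTwo
  let e : ℕ × ℕ ≃ {n : Fin 2 → ℕ // (∀ i j : Fin 2, i < j → n j < n i) ∧ ∀ j, 0 < n j} :=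
    { toFun := fun p => ⟨![p.1 + p.2 + 2, p.2 + 1], by
        refine ⟨fun i j h => ?_, fun j => ?_⟩
        · fin_cases i <;> fin_cases j <;> simp at h ⊢
        · fin_cases j <;> simp⟩
      invFun := fun n => (n.1 0 - n.1 1 - 1, n.1 1 - 1)
      left_inv := fun p => by
        ext <;> simp
        omega
      right_inv := fun n => by
        have h1 := n.2.2 1
        have h2 := n.2.1 0 1 (by simp)
        ext j
        fin_cases j <;> simp <;> omega }
  rw [← e.tsum_eq]
  simp [e, Fin.prod_univ_two, mul_comm]

lemma hasSum_zetaOne {a : ℕ} (ha : 2 ≤ a) :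
    HasSum (fun n : ℕ => ((n : ℝ) + 1)⁻¹ ^ a) (zetaOne a) := by
  have h := (summable_nat_add_iff 1).mpr (Real.summable_nat_pow_inv.mpr ha)
  refine Summable.hasSum (h.congr fun n => ?_)
  push_cast
  rw [inv_pow]

lemma hasSum_zetaOne_mul {a b : ℕ} (ha : 2 ≤ a) (hb : 2 ≤ b) :
    HasSum (fun p : ℕ × ℕ => ((p.1 : ℝ) + 1)⁻¹ ^ a * ((p.2 : ℝ) + 1)⁻¹ ^ b)
      (zetaOne a * zetaOne b) :=
  (hasSum_zetaOne ha).mul (hasSum_zetaOne hb)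
    ((hasSum_zetaOne ha).summable.mul_of_nonneg (hasSum_zetaOne hb).summable
      (fun _ => by positivity) (fun _ => by positivity))

/-- For `r ≥ 4` the series of `ζ(r, s)` converges, being dominated by that of `ζ(2)²`. -/
lemma hasSum_zetaTwo {r s : ℕ} (hr : 4 ≤ r) :
    HasSum (fun p : ℕ × ℕ => ((p.1 : ℝ) + p.2 + 2)⁻¹ ^ r * ((p.2 : ℝ) + 1)⁻¹ ^ s)
      (zetaTwo r s) := by
  refine Summable.hasSum ?_
  refine Summable.of_nonneg_of_le (fun p => by positivity) (fun p => ?_)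
    (hasSum_zetaOne_mul le_rfl le_rfl).summable
  have hx : ((p.1 : ℝ) + p.2 + 2)⁻¹ ≤ ((p.1 : ℝ) + 1)⁻¹ := by
    gcongr ?_⁻¹
    linarith [(Nat.cast_nonneg p.2 : (0 : ℝ) ≤ p.2)]
  have hy : ((p.1 : ℝ) + p.2 + 2)⁻¹ ≤ ((p.2 : ℝ) + 1)⁻¹ := by
    gcongr ?_⁻¹
    linarith [(Nat.cast_nonneg p.1 : (0 : ℝ) ≤ p.1)]
  have hz : ((p.1 : ℝ) + p.2 + 2)⁻¹ ≤ 1 := inv_le_one_of_one_le₀ (by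
    linarith [(Nat.cast_nonneg p.1 : (0 : ℝ) ≤ p.1), (Nat.cast_nonneg p.2 : (0 : ℝ) ≤ p.2)])
  have hw : ((p.2 : ℝ) + 1)⁻¹ ≤ 1 := inv_le_one_of_one_le₀ (by
    linarith [(Nat.cast_nonneg p.2 : (0 : ℝ) ≤ p.2)])
  calc ((p.1 : ℝ) + p.2 + 2)⁻¹ ^ r * ((p.2 : ℝ) + 1)⁻¹ ^ s
      ≤ ((p.1 : ℝ) + p.2 + 2)⁻¹ ^ 4 * 1 := by
        exact mul_le_mul (pow_le_pow_of_le_one (by positivity) hz hr)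
          (pow_le_one₀ (by positivity) hw) (by positivity) (by positivity)
    _ = ((p.1 : ℝ) + p.2 + 2)⁻¹ ^ 2 * ((p.1 : ℝ) + p.2 + 2)⁻¹ ^ 2 := by ring
    _ ≤ ((p.1 : ℝ) + 1)⁻¹ ^ 2 * ((p.2 : ℝ) + 1)⁻¹ ^ 2 := by gcongr

/-- The stuffle product: split the pairs `(m, n)` according to `m > n`, `m < n` and `m = n`. -/
lemma stuffle {a b : ℕ} (ha : 4 ≤ a) (hb : 4 ≤ b) :
    zetaOne a * zetaOne b = zetaTwo a b + (zetaTwo b a + zetaOne (a + b)) := by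
  let f : (ℕ × ℕ) ⊕ ((ℕ × ℕ) ⊕ ℕ) → ℕ × ℕ :=
    Sum.elim (fun p => (p.1 + p.2 + 1, p.2))
      (Sum.elim (fun p => (p.2, p.1 + p.2 + 1)) (fun n => (n, n)))
  have hf : Function.Bijective f := by
    constructor
    · rintro (⟨m, n⟩ | ⟨m, n⟩ | n) (⟨m', n'⟩ | ⟨m', n'⟩ | n') h <;>
        simp [f] at h ⊢ <;> omega
    · rintro ⟨m, n⟩
      rcases lt_trichotomy m n with h | h | h
      · exact ⟨Sum.inr (Sum.inl (n - m - 1, m)), by simp [f]; omega⟩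
      · exact ⟨Sum.inr (Sum.inr n), by simp [f, h]⟩
      · exact ⟨Sum.inl (m - n - 1, n), by simp [f]; omega⟩
  have h := (Equiv.ofBijective f hf).hasSum_iff.mpr
    (hasSum_zetaOne_mul (a := a) (b := b) (by omega) (by omega))
  refine h.unique (HasSum.sum ?_ (HasSum.sum ?_ ?_))
  · refine (hasSum_zetaTwo ha).congr_fun fun p => ?_
    simp [f, add_assoc, one_add_one_eq_two]
  · refine (hasSum_zetaTwo hb).congr_fun fun p => ?_
    simp [f, add_assoc, one_add_one_eq_two, mul_comm]
  · refine (hasSum_zetaOne (by omega)).congr_fun fun p => ?_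
    simp [f, pow_add]

/-- The shuffle product in weight 12, given the partial fraction expansion `hpf` of `m^{-a} n^{-b}`.
For `a, b ≥ 4` the binomial coefficients vanish for `r < 4`, which is why `r` starts at `4`. -/
lemma shuffle {a b : ℕ} (ha : 2 ≤ a) (hb : 2 ≤ b)
    (hpf : ∀ m n : ℝ, 0 < m → 0 < n → m⁻¹ ^ a * n⁻¹ ^ b =
      ∑ r ∈ Finset.Icc 4 11, (((r - 1).choose (a - 1) : ℝ) * ((m + n)⁻¹ ^ r * n⁻¹ ^ (12 - r)) +
        ((r - 1).choose (b - 1) : ℝ) * ((n + m)⁻¹ ^ r * m⁻¹ ^ (12 - r)))) :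
    zetaOne a * zetaOne b = ∑ r ∈ Finset.Icc 4 11,
      (((r - 1).choose (a - 1) : ℝ) * zetaTwo r (12 - r) +
        ((r - 1).choose (b - 1) : ℝ) * zetaTwo r (12 - r)) := by
  refine (hasSum_zetaOne_mul ha hb).unique ?_
  have key := hasSum_sum (s := Finset.Icc 4 11) fun r hr =>
    ((hasSum_zetaTwo (s := 12 - r) (Finset.mem_Icc.mp hr).1).mul_left
      ((r - 1).choose (a - 1) : ℝ)).add
    (((Equiv.prodComm ℕ ℕ).hasSum_iff.mpr
      (hasSum_zetaTwo (s := 12 - r) (Finset.mem_Icc.mp hr).1)).mul_left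
      ((r - 1).choose (b - 1) : ℝ))
  refine key.congr_fun fun p => ?_
  rw [hpf _ _ (by positivity) (by positivity)]
  refine Finset.sum_congr rfl fun r _ => ?_
  simp only [Function.comp_apply, Equiv.prodComm_apply, Prod.fst_swap, Prod.snd_swap]
  congr 5 <;> ring

lemma sum_Icc_four_eleven (f : ℕ → ℝ) : ∑ r ∈ Finset.Icc 4 11, f r =
    f 4 + f 5 + f 6 + f 7 + f 8 + f 9 + f 10 + f 11 := by
  simp [show Finset.Icc 4 11 = {4, 5, 6, 7, 8, 9, 10, 11} by rfl]
  ring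

lemma shuffle_four_eight : zetaOne 4 * zetaOne 8 = ∑ r ∈ Finset.Icc 4 11,
    (((r - 1).choose (4 - 1) : ℝ) * zetaTwo r (12 - r) +
      ((r - 1).choose (8 - 1) : ℝ) * zetaTwo r (12 - r)) := by
  refine shuffle (by norm_num) (by norm_num) ?_
  intro m n hm hn
  simp [sum_Icc_four_eleven, Nat.choose]
  field_simp
  ring

lemma shuffle_five_seven : zetaOne 5 * zetaOne 7 = ∑ r ∈ Finset.Icc 4 11,
    (((r - 1).choose (5 - 1) : ℝ) * zetaTwo r (12 - r) +
      ((r - 1).choose (7 - 1) : ℝ) * zetaTwo r (12 - r)) := by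
  refine shuffle (by norm_num) (by norm_num) ?_
  intro m n hm hn
  simp [sum_Icc_four_eleven, Nat.choose]
  field_simp
  ring

lemma shuffle_six_six : zetaOne 6 * zetaOne 6 = ∑ r ∈ Finset.Icc 4 11,
    (((r - 1).choose (6 - 1) : ℝ) * zetaTwo r (12 - r) +
      ((r - 1).choose (6 - 1) : ℝ) * zetaTwo r (12 - r)) := by
  refine shuffle (by norm_num) (by norm_num) ?_
  intro m n hm hn
  simp [sum_Icc_four_eleven, Nat.choose]
  field_simp
  ring

lemma bernoulli_six : bernoulli 6 = 1 / 42 := by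
  have h5 : bernoulli' 5 = 0 := bernoulli'_eq_zero_of_odd (by decide) (by norm_num)
  rw [bernoulli_eq_bernoulli'_of_ne_one (by norm_num), bernoulli'_def]
  norm_num [Finset.sum_range_succ, Nat.choose, h5]

lemma bernoulli_twelve : bernoulli 12 = -691 / 2730 := by
  have h5 : bernoulli' 5 = 0 := bernoulli'_eq_zero_of_odd (by decide) (by norm_num)
  have h7 : bernoulli' 7 = 0 := bernoulli'_eq_zero_of_odd (by decide) (by norm_num)
  have h9 : bernoulli' 9 = 0 := bernoulli'_eq_zero_of_odd (by decide) (by norm_num)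
  have h11 : bernoulli' 11 = 0 := bernoulli'_eq_zero_of_odd (by decide) (by norm_num)
  have h6 : bernoulli' 6 = 1 / 42 := by
    rw [← bernoulli_eq_bernoulli'_of_ne_one (by norm_num), bernoulli_six]
  have h8 : bernoulli' 8 = -1 / 30 := by
    rw [bernoulli'_def]
    norm_num [Finset.sum_range_succ, Nat.choose, h5, h6, h7]
  have h10 : bernoulli' 10 = 5 / 66 := by
    rw [bernoulli'_def]
    norm_num [Finset.sum_range_succ, Nat.choose, h5, h6, h7, h8, h9]
  rw [bernoulli_eq_bernoulli'_of_ne_one (by norm_num), bernoulli'_def]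
  norm_num [Finset.sum_range_succ, Nat.choose, h5, h6, h7, h8, h9, h10, h11]

lemma zetaOne_two_mul {k : ℕ} (hk : k ≠ 0) :
    zetaOne (2 * k) = (-1 : ℝ) ^ (k + 1) * (2 : ℝ) ^ (2 * k - 1) * Real.pi ^ (2 * k) *
      bernoulli (2 * k) / (2 * k).factorial := by
  refine (hasSum_zetaOne (by omega)).unique ?_
  have h := (hasSum_nat_add_iff' 1).mpr (hasSum_zeta_nat hk)
  simpa [hk] using h

/-- From Euler's evaluations `ζ(6) = π⁶ / 945` and `ζ(12) = 691 π¹² / 638512875`. -/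
lemma zetaOne_six_sq : zetaOne 6 * zetaOne 6 = 715 / 691 * zetaOne 12 := by
  have h6 := zetaOne_two_mul (k := 3) (by norm_num)
  have h12 := zetaOne_two_mul (k := 6) (by norm_num)
  norm_num [bernoulli_six, bernoulli_twelve, Nat.factorial] at h6 h12
  rw [h6, h12]
  ring

/-- `(5197/691)·ζ(12) = 168·ζ(5,7) + 150·ζ(7,5) + 28·ζ(9,3)`. -/
theorem zeta_twelve_relation :
    (5197 / 691 : ℝ) * mzv ![12] =
      168 * mzv ![5, 7] + 150 * mzv ![7, 5] + 28 * mzv ![9, 3] := by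
  simp only [mzv_one_eq, mzv_two_eq]
  have s4 := stuffle (a := 4) (b := 8) le_rfl (by norm_num)
  have s5 := stuffle (a := 5) (b := 7) (by norm_num) (by norm_num)
  have s6 := stuffle (a := 6) (b := 6) (by norm_num) (by norm_num)
  have p4 := shuffle_four_eight
  have p5 := shuffle_five_seven
  have p6 := shuffle_six_six
  have e6 := zetaOne_six_sq
  norm_num [sum_Icc_four_eleven, Nat.choose] at s4 s5 s6 p4 p5 p6
  -- The combination `42 D(4, 8) - 90 D(5, 7) + 55 D(6, 6)` plus `15` times `s6` and `e6`.
  linarith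
end
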